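/- Let 𝒫 be a nonempty admissible and linearly repetitive set of abstract patterns in ℝ^d, and let F be a subadditive function on the set 𝒫_B of abstract box-patterns derived from 𝒫. Then the limits lim_{r→∞} F⁺(r) and lim_{r→∞} F⁻(r) exist in ℝ and are equal. Consequently there exists L ∈ ℝ such that F(P)/|P| → L as |P| → ∞ along 𝒫_∞, i.e. for every ε > 0 there is V > 0 such that |F(P)/|P| − L| < ε for every P ∈ 𝒫_∞ with |P| ≥ V. -/

import Mathlib

open Metric Set Filter MeasureTheory Topology

noncomputable section

/-- Points of `ℝ^d`. -/
abbrev Pt (d : ℕ) := EuclideanSpace ℝ (Fin d)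

variable (d : ℕ)

/-- A tile: a subset of `ℝ^d` homeomorphic to the closed unit ball. -/
def IsTile (m : Set (Pt d)) : Prop :=
  Nonempty (m ≃ₜ (Metric.closedBall (0 : Pt d) 1))

/-- A pattern: a finite nonempty collection of tiles whose interiors are pairwise disjoint. -/
def IsPattern (M : Set (Set (Pt d))) : Prop :=
  M.Finite ∧ M.Nonempty ∧ (∀ m ∈ M, IsTile d m) ∧
    M.Pairwise fun m m' => interior m ∩ interior m' = ∅

/-- A tiling of `ℝ^d`: a collection of tiles with pairwise disjoint interiors covering `ℝ^d`. -/
def IsTiling (T : Set (Set (Pt d))) : Prop :=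
  (∀ m ∈ T, IsTile d m) ∧
    (T.Pairwise fun m m' => interior m ∩ interior m' = ∅) ∧ ⋃₀ T = Set.univ

/-- Translation of a pattern by `t`. -/
def patTrans (t : Pt d) (M : Set (Set (Pt d))) : Set (Set (Pt d)) :=
  (fun m => (fun x => x + t) '' m) '' M

/-- Support (underlying set) of a pattern. -/
def supp (M : Set (Set (Pt d))) : Set (Pt d) := ⋃₀ M

/-- Inner radius: the largest `r` such that some closed ball of radius `r` fits inside `s(M)`. -/
def rIn (M : Set (Set (Pt d))) : ℝ :=
  sSup {r : ℝ | ∃ x : Pt d, Metric.closedBall x r ⊆ supp d M}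

/-- Outer radius: the smallest `r` such that some closed ball of radius `r` contains `s(M)`. -/
def rOut (M : Set (Set (Pt d))) : ℝ :=
  sInf {r : ℝ | ∃ x : Pt d, supp d M ⊆ Metric.closedBall x r}

/-- The pattern class of `P` is a subpattern of (the class of) `Q`:
some translate of `P` is contained in `Q`. -/
def SubpatternClass (P Q : Set (Set (Pt d))) : Prop :=
  ∃ t : Pt d, patTrans d t P ⊆ Q

/-- A set of abstract patterns is modelled as a translation-closed set `Ps` of concrete
patterns (the union of the pattern classes).  `Admissible` encodes conditions
(i)–(iii) of Definition 2.1. -/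
structure Admissible (Ps : Set (Set (Set (Pt d)))) : Prop where
  pattern : ∀ P ∈ Ps, IsPattern d P
  transClosed : ∀ (t : Pt d), ∀ P ∈ Ps, patTrans d t P ∈ Ps
  subClosed : ∀ P ∈ Ps, ∀ Q : Set (Set (Pt d)), IsPattern d Q → Q ⊆ P → Q ∈ Ps
  tileBounds : ∃ rmin rmax : ℝ, 0 < rmin ∧ rmin ≤ rmax ∧
    ∀ m : Set (Pt d), ({m} : Set (Set (Pt d))) ∈ Ps →
      rmin ≤ rIn d {m} ∧ rIn d {m} ≤ rOut d {m} ∧ rOut d {m} ≤ rmax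
  extend : ∀ P ∈ Ps, (0 : Pt d) ∈ supp d P → ∀ r : ℝ, 0 < r →
    ∃ Q ∈ Ps, P ⊆ Q ∧ Metric.closedBall (0 : Pt d) r ⊆ supp d Q

/-- Linear repetitivity of a (translation-closed) set of patterns. -/
def LinearlyRepetitive (Ps : Set (Set (Set (Pt d)))) : Prop :=
  ∃ c : ℝ, 0 < c ∧ ∀ P ∈ Ps, 1 ≤ rOut d P →
    ∀ Q ∈ Ps, c * rOut d P ≤ rIn d Q → SubpatternClass d P Q

/-- The box determined by corner functions `a b : Fin d → ℝ`. -/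
def boxSet (a b : Fin d → ℝ) : Set (Pt d) := {x | ∀ j, x j ∈ Set.Icc (a j) (b j)}

/-- `B` is a box. -/
def IsBox (B : Set (Pt d)) : Prop :=
  ∃ a b : Fin d → ℝ, (∀ j, a j < b j) ∧ B = boxSet d a b

/-- `B` is an `r`-box: all side lengths lie in `[r, 2r]`. -/
def IsRBox (r : ℝ) (B : Set (Pt d)) : Prop :=
  ∃ a b : Fin d → ℝ, (∀ j, a j < b j) ∧ B = boxSet d a b ∧
    ∀ j, r ≤ b j - a j ∧ b j - a j ≤ 2 * r

/-- Width of a box: the minimum of its side lengths. -/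
def widthOf (B : Set (Pt d)) : ℝ :=
  ⨅ j : Fin d, (sSup ((fun x : Pt d => x j) '' B) - sInf ((fun x : Pt d => x j) '' B))

/-- Volume of a subset of `ℝ^d`. -/
def volOf (B : Set (Pt d)) : ℝ := (volume B).toReal

/-- Restriction `M ∩ B` of a pattern or tiling `M` to `B`. -/
def patRestrict (M : Set (Set (Pt d))) (B : Set (Pt d)) : Set (Set (Pt d)) :=
  {s | ∃ m ∈ M, (m ∩ interior B).Nonempty ∧ s = m ∩ B}

/-- The set `Ps_B` of box-patterns derived from `Ps` (concrete representatives). -/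
def BoxPatterns (Ps : Set (Set (Set (Pt d)))) : Set (Set (Set (Pt d))) :=
  {Q | ∃ P ∈ Ps, ∃ B : Set (Pt d), IsBox d B ∧ B ⊆ supp d P ∧ Q = patRestrict d P B}

/-- The set `Ps(r)` of `r`-patterns derived from `Ps`. -/
def RPatterns (Ps : Set (Set (Set (Pt d)))) (r : ℝ) : Set (Set (Set (Pt d))) :=
  {Q | ∃ P ∈ Ps, ∃ B : Set (Pt d), IsRBox d r B ∧ B ⊆ supp d P ∧ Q = patRestrict d P B}

/-- Width of a box-pattern. -/
def patWidth (M : Set (Set (Pt d))) : ℝ := widthOf d (supp d M)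

/-- Volume of a box-pattern. -/
def patVol (M : Set (Set (Pt d))) : ℝ := volOf d (supp d M)

/-- A subadditive function on `Ps_B`, with constants `dF, rF` and error function `cF`.
`F` is defined on concrete patterns and is translation-invariant (i.e. well defined on
pattern classes). -/
structure SubadditiveOn (Ps : Set (Set (Set (Pt d)))) (F : Set (Set (Pt d)) → ℝ)
    (dF rF : ℝ) (cF : ℝ → ℝ) : Prop where
  invariant : ∀ (t : Pt d), ∀ M ∈ BoxPatterns d Ps, F (patTrans d t M) = F M
  dF_nonneg : 0 ≤ dF
  rF_nonneg : 0 ≤ rF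
  cF_anti : ∀ r s : ℝ, rF ≤ r → r ≤ s → cF s ≤ cF r
  cF_lim : Tendsto cF atTop (nhds 0)
  subadd : ∀ M ∈ BoxPatterns d Ps, ∀ (n : ℕ) (Bj : Fin n → Set (Pt d)),
    (∀ j, IsBox d (Bj j)) →
    (∀ i j, i ≠ j → interior (Bj i) ∩ interior (Bj j) = ∅) →
    (⋃ j, Bj j) = supp d M →
    (∀ j, rF ≤ widthOf d (Bj j)) →
    F M ≤ (∑ j, F (patRestrict d M (Bj j))) +
      ∑ j, cF (widthOf d (Bj j)) * volOf d (Bj j)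
  bound : ∀ M ∈ BoxPatterns d Ps, |F M| ≤ dF * patVol d M

/-- The upper mean `F⁺(r)`. -/
def Fplus (Ps : Set (Set (Set (Pt d)))) (F : Set (Set (Pt d)) → ℝ) (r : ℝ) : ℝ :=
  sSup ((fun P => F P / patVol d P) '' RPatterns d Ps r)

/-- The lower mean `F⁻(r)`. -/
def Fminus (Ps : Set (Set (Set (Pt d)))) (F : Set (Set (Pt d)) → ℝ) (r : ℝ) : ℝ :=
  sInf ((fun P => F P / patVol d P) '' RPatterns d Ps r)

/-!
Cutting a large box into `r`-boxes shows that `F⁺(s) ≤ F⁺(r) + c_F(r)` for all `s ≥ r`, so the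
upper means converge, say to `L`. By linear repetitivity every `r`-pattern `M` occurs, well away
from the boundary, in every pattern `N` of `𝒫(K r)`, for a constant `K`. The copy fills at least
the fraction `(2K)^{-d}` of `N`. Applying subadditivity to the grid that has this copy as its
central cell, a deficit of `F(M)/|M|` below `F⁺(r)` lowers `F⁺(K r)` by `(2K)^{-d}` times that
deficit, up to `2 c_F(r)`. Since `F⁺(K r)` and `F⁺(r)` have the same limit, the deficits tend to
zero and `F⁻(r) → L`.

The box restriction of a copy of `M` inside `N` is a translate of `M` only if no further tile
touches the interior of the box, not even at a non-interior point of that tile. This is excluded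
because tiles are closures of their interiors, by invariance of domain, which follows from
Brouwer's fixed point theorem and thus from the volume argument of Milnor and Rogers.
-/

/-! ### Brouwer's fixed point theorem -/

section Brouwer

variable {E : Type*} [NormedAddCommGroup E]

lemma exists_weights_det_one_add_eq_sum [NormedSpace ℝ E] [FiniteDimensional ℝ E] {s : Finset ℝ}
    (hs : Module.finrank ℝ E < s.card) :
    ∃ w : ℝ → ℝ, ∑ t ∈ s, w t = 1 ∧
      ∀ A : E →L[ℝ] E, (1 + A).det = ∑ t ∈ s, w t * (1 + t • A).det := by
  have hne : s.Nonempty := Finset.card_pos.mp (by lia)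
  refine ⟨fun t => (Lagrange.basis s id t).eval 1, ?_, fun A => ?_⟩
  · rw [← Polynomial.eval_finsetSum, Lagrange.sum_basis (injOn_id _) hne, Polynomial.eval_one]
  let b := Module.finBasis ℝ E
  let M := LinearMap.toMatrix b b (A : E →ₗ[ℝ] E)
  let q : Polynomial ℝ :=
    ((Polynomial.X : Polynomial ℝ) • M.map Polynomial.C + (1 : Matrix _ _ ℝ).map Polynomial.C).det
  have eval_q (t : ℝ) : q.eval t = (1 + t • A).det := by
    have det_eq : (1 + t • A).det = (1 + t • M).det := by
      rw [ContinuousLinearMap.det, ← LinearMap.det_toMatrix b]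
      congr 1
      simp [M]
    rw [det_eq, ← Polynomial.coe_evalRingHom, RingHom.map_det]
    congr 1
    ext i j
    simp only [Polynomial.coe_evalRingHom, RingHom.mapMatrix_apply, Matrix.map_apply,
      Matrix.add_apply, Matrix.smul_apply, smul_eq_mul, Polynomial.eval_add, Polynomial.eval_mul,
      Polynomial.eval_X, Polynomial.eval_C]
    ring
  have degree_q : q.degree < s.card := by
    refine Polynomial.degree_le_natDegree.trans_lt (Nat.cast_lt.mpr (lt_of_le_of_lt ?_ hs))
    exact (Polynomial.natDegree_det_X_add_C_le M 1).trans_eq (Fintype.card_fin _)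
  calc (1 + A).det = q.eval 1 := by rw [eval_q, one_smul]
    _ = ∑ t ∈ s, (Lagrange.basis s id t).eval 1 * (1 + t • A).det := by
      rw [Lagrange.eq_interpolate (v := id) (injOn_id _) degree_q, Lagrange.interpolate_apply,
        Polynomial.eval_finsetSum]
      simp [eval_q, mul_comm]

lemma lipschitzWith_indicator_closedBall [NormedSpace ℝ E] {F : Type*} [NormedAddCommGroup F]
    {g : E → F} {K : NNReal} (hg : LipschitzOnWith K g (closedBall 0 1))
    (hg0 : ∀ x ∈ sphere (0 : E) 1, g x = 0) :
    LipschitzWith K ((closedBall 0 1).indicator g) := by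
  have norm_le {x y : E} (hx : x ∈ closedBall 0 1) (hy : y ∉ closedBall 0 1) :
      ‖g x‖ ≤ K * dist x y := by
    rw [mem_closedBall_zero_iff] at hx hy
    have hseg : ContinuousOn (fun t : ℝ => ‖AffineMap.lineMap x y t‖) (Icc 0 1) :=
      AffineMap.lineMap_continuous.norm.continuousOn
    obtain ⟨t, ht, hz⟩ : (1 : ℝ) ∈ (fun t : ℝ => ‖AffineMap.lineMap x y t‖) '' Icc 0 1 :=
      intermediate_value_Icc zero_le_one hseg (by simpa using ⟨hx, (not_le.mp hy).le⟩)
    set z : E := AffineMap.lineMap x y t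
    have hz' : z ∈ sphere 0 1 := mem_sphere_zero_iff_norm.mpr hz
    calc ‖g x‖ = dist (g x) (g z) := by rw [hg0 z hz', dist_zero_right]
      _ ≤ K * dist x z :=
        hg.dist_le_mul x (mem_closedBall_zero_iff.mpr hx) z (sphere_subset_closedBall hz')
      _ = K * (t * dist x y) := by
        rw [dist_left_lineMap, Real.norm_of_nonneg ht.1]
      _ ≤ K * dist x y := by
        gcongr
        exact mul_le_of_le_one_left dist_nonneg ht.2
  refine LipschitzWith.of_dist_le_mul fun x y => ?_
  by_cases hx : x ∈ closedBall 0 1 <;> by_cases hy : y ∈ closedBall 0 1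
  · simpa [hx, hy] using hg.dist_le_mul x hx y hy
  · simpa [hx, hy] using norm_le hx hy
  · simpa [hx, hy, dist_comm x y] using norm_le hy hx
  · simp only [indicator_of_notMem hx, indicator_of_notMem hy, dist_self]
    positivity

lemma bijective_id_add_of_lipschitzWith [CompleteSpace E] {G : E → E} {k : NNReal}
    (hG : LipschitzWith k G) (hk : k < 1) : Function.Bijective fun x => x + G x := by
  have hcontr (y : E) : ContractingWith k fun x => y - G x :=
    ⟨hk, LipschitzWith.of_dist_le_mul fun u v => by
      simpa only [dist_sub_left] using hG.dist_le_mul u v⟩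
  refine ⟨fun x y hxy => ?_, fun y => ?_⟩
  · refine (hcontr (x + G x)).fixedPoint_unique' (add_sub_cancel_right x _) ?_
    change x + G x - G y = y
    rw [sub_eq_iff_eq_add]
    exact hxy
  · have hfix : y - G (hcontr y).fixedPoint = (hcontr y).fixedPoint :=
      (hcontr y).fixedPoint_isFixedPt
    exact ⟨(hcontr y).fixedPoint, (sub_eq_iff_eq_add.mp hfix).symm⟩

lemma image_eq_of_bijective_of_eqOn_id {α : Type*} {f : α → α} {s : Set α}
    (hf : Function.Bijective f) (hs : EqOn f id sᶜ) : f '' s = s := by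
  rw [← compl_inj_iff, ← image_compl_eq hf, hs.image_eq_self]

lemma det_one_add_pos_of_norm_lt_one [NormedSpace ℝ E] [FiniteDimensional ℝ E] {A : E →L[ℝ] E}
    (hA : ‖A‖ < 1) : 0 < (1 + A).det := by
  have det_ne_zero {B : E →L[ℝ] E} (hB : ‖B‖ < 1) : (1 + B).det ≠ 0 := by
    intro hdet
    obtain ⟨v, hv, hv0⟩ := Submodule.exists_mem_ne_zero_of_ne_bot
      (LinearMap.det_eq_zero_iff_ker_ne_bot.mp hdet)
    have hvB : v = -B v := eq_neg_of_add_eq_zero_left hv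
    have hBv : ‖v‖ = ‖B v‖ := (congrArg norm hvB).trans (norm_neg _)
    have : ‖B v‖ ≤ ‖B‖ * ‖v‖ := B.le_opNorm v
    nlinarith [norm_pos_iff.mpr hv0]
  by_contra! hdet
  have hcont : Continuous fun B : E →L[ℝ] E => (1 + B).det :=
    ContinuousLinearMap.continuous_det.comp (continuous_const_add 1)
  have hone : (1 + (0 : E →L[ℝ] E)).det = 1 := by
    rw [add_zero]
    exact LinearMap.det_id
  obtain ⟨B, hB, hB0⟩ := (convex_ball (0 : E →L[ℝ] E) 1).isPreconnected.intermediate_value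
    (mem_ball_zero_iff.mpr hA) (mem_ball_self one_pos) hcont.continuousOn
    (show (0 : ℝ) ∈ Icc _ _ from ⟨hdet, hone ▸ zero_le_one⟩)
  exact det_ne_zero (mem_ball_zero_iff.mp hB) hB0

section Measure

variable [NormedSpace ℝ E] [FiniteDimensional ℝ E] [MeasurableSpace E] [BorelSpace E]
  (μ : Measure E) [μ.IsAddHaarMeasure] {g : E → E}

lemma integral_ball_det_one_add_fderiv_of_lipschitzOnWith {k : NNReal} (hk : k < 1)
    (hg : DifferentiableOn ℝ g (ball 0 1)) (hgk : LipschitzOnWith k g (closedBall 0 1))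
    (hg0 : ∀ x ∈ sphere (0 : E) 1, g x = 0) :
    ∫ x in ball 0 1, (1 + fderiv ℝ g x).det ∂μ = μ.real (ball 0 1) := by
  let G := (closedBall (0 : E) 1).indicator g
  have hbij : Function.Bijective fun x => x + G x :=
    have := FiniteDimensional.complete ℝ E
    bijective_id_add_of_lipschitzWith (lipschitzWith_indicator_closedBall hgk hg0) hk
  have hG0 {x : E} (hx : x ∈ (ball 0 1)ᶜ) : G x = 0 := by
    by_cases hx1 : x ∈ closedBall 0 1
    · refine (indicator_of_mem hx1 g).trans (hg0 x ?_)
      rw [← closedBall_sdiff_ball]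
      exact ⟨hx1, hx⟩
    · exact indicator_of_notMem hx1 g
  have hderiv : ∀ x ∈ ball (0 : E) 1,
      HasFDerivWithinAt (fun x => x + G x) (1 + fderiv ℝ g x) (ball 0 1) x := fun x hx =>
    ((hasFDerivAt_id x).add
      (hg.differentiableAt (isOpen_ball.mem_nhds hx)).hasFDerivAt).hasFDerivWithinAt.congr
      (fun y hy => congrArg (y + ·) (indicator_of_mem (ball_subset_closedBall hy) g))
      (congrArg (x + ·) (indicator_of_mem (ball_subset_closedBall hx) g))
  have himage : (fun x => x + G x) '' ball 0 1 = ball 0 1 :=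
    image_eq_of_bijective_of_eqOn_id hbij fun x hx => by rw [hG0 hx, add_zero, id]
  have hdet_pos : ∀ x ∈ ball (0 : E) 1, 0 < (1 + fderiv ℝ g x).det := fun x hx =>
    det_one_add_pos_of_norm_lt_one ((norm_fderiv_le_of_lipschitzOn ℝ
      (isOpen_ball.mem_nhds hx) (hgk.mono ball_subset_closedBall)).trans_lt (mod_cast hk))
  calc ∫ x in ball 0 1, (1 + fderiv ℝ g x).det ∂μ
      = ∫ x in ball 0 1, |(1 + fderiv ℝ g x).det| • (1 : ℝ) ∂μ :=
        setIntegral_congr_fun measurableSet_ball fun x hx => by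
          simp only [abs_of_pos (hdet_pos x hx), smul_eq_mul, mul_one]
    _ = ∫ _ in (fun x => x + G x) '' ball 0 1, (1 : ℝ) ∂μ :=
        (integral_image_eq_integral_abs_det_fderiv_smul μ measurableSet_ball hderiv
          hbij.injective.injOn fun _ => 1).symm
    _ = μ.real (ball 0 1) := by rw [himage, setIntegral_one_eq_measureReal]

/- For small `t > 0` the integral of `det (1 + t • Dg)` is the volume of the ball, by change of
variables; as the determinant is a polynomial in `t`, this persists at `t = 1`. -/
lemma integral_ball_det_one_add_fderiv (hg : ContDiff ℝ 1 g)
    (hg0 : ∀ x ∈ sphere (0 : E) 1, g x = 0) :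
    ∫ x in ball 0 1, (1 + fderiv ℝ g x).det ∂μ = μ.real (ball 0 1) := by
  obtain ⟨K, hK⟩ := hg.locallyLipschitz.locallyLipschitzOn.exists_lipschitzOnWith_of_compact
    (isCompact_closedBall (0 : E) 1)
  have hK1 : (0 : ℝ) < 1 / (K + 1) := by positivity
  obtain ⟨s, hs, hcard⟩ :=
    (Ioo_infinite hK1).exists_subset_card_eq (Module.finrank ℝ E + 1)
  obtain ⟨w, hw, hdet⟩ := exists_weights_det_one_add_eq_sum (E := E) (s := s) (by lia)
  have integral_smul : ∀ t ∈ s,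
      ∫ x in ball 0 1, (1 + t • fderiv ℝ g x).det ∂μ = μ.real (ball 0 1) := by
    intro t ht
    obtain ⟨ht0, htK⟩ := hs ht
    have hgd : Differentiable ℝ g := hg.differentiable one_ne_zero
    have hk : ‖t‖₊ * K < 1 := by
      rw [← NNReal.coe_lt_coe, NNReal.coe_mul, coe_nnnorm, Real.norm_of_nonneg ht0.le]
      rw [lt_div_iff₀ (by positivity)] at htK
      push_cast
      linarith
    rw [← integral_ball_det_one_add_fderiv_of_lipschitzOnWith μ (g := t • g) hk
      (hgd.const_smul t).differentiableOn
      ((lipschitzWith_smul t).comp_lipschitzOnWith hK)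
      fun x hx => by rw [Pi.smul_apply, hg0 x hx, smul_zero]]
    simp only [fderiv_const_smul (hgd _)]
  have hcont (t : ℝ) : Continuous fun x => (1 + t • fderiv ℝ g x).det :=
    ContinuousLinearMap.continuous_det.comp
      (continuous_const.add ((hg.continuous_fderiv one_ne_zero).const_smul t))
  have hint (t : ℝ) : IntegrableOn (fun x => w t * (1 + t • fderiv ℝ g x).det) (ball 0 1) μ :=
    (((hcont t).const_mul (w t)).continuousOn.integrableOn_compact
      (isCompact_closedBall 0 1)).mono_set ball_subset_closedBall
  calc ∫ x in ball 0 1, (1 + fderiv ℝ g x).det ∂μ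
      = ∫ x in ball 0 1, ∑ t ∈ s, w t * (1 + t • fderiv ℝ g x).det ∂μ :=
        integral_congr_ae (ae_of_all _ fun x => hdet (fderiv ℝ g x))
    _ = ∑ t ∈ s, w t * ∫ x in ball 0 1, (1 + t • fderiv ℝ g x).det ∂μ := by
        rw [integral_finsetSum _ fun t _ => hint t]
        exact Finset.sum_congr rfl fun t _ => integral_const_mul _ _
    _ = ∑ t ∈ s, w t * μ.real (ball 0 1) :=
        Finset.sum_congr rfl fun t ht => by rw [integral_smul t ht]
    _ = μ.real (ball 0 1) := by rw [← Finset.sum_mul, hw, one_mul]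

end Measure

variable [InnerProductSpace ℝ E] [FiniteDimensional ℝ E]

lemma det_fderiv_eq_zero_of_norm_eq_one {p : E → E} {x : E}
    (hp : DifferentiableAt ℝ p x) (hp1 : ∀ y, ‖p y‖ = 1) : (fderiv ℝ p x).det = 0 := by
  by_contra hdet
  have hsurj : Function.Surjective (fderiv ℝ p x : E →ₗ[ℝ] E) :=
    ((Module.End.isUnit_iff _).mp
      ((LinearMap.isUnit_iff_isUnit_det _).mpr (isUnit_iff_ne_zero.mpr hdet))).2
  obtain ⟨v, hv⟩ := hsurj (p x)
  have hconst : (fun y => inner ℝ (p y) (p y)) = fun _ => (1 : ℝ) := by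
    ext y
    rw [real_inner_self_eq_norm_sq, hp1, one_pow]
  have hderiv := hp.hasFDerivAt.inner ℝ hp.hasFDerivAt
  rw [hconst] at hderiv
  have hzero := congrArg (fun A => A v) (hderiv.unique (hasFDerivAt_const 1 x))
  simp [show fderiv ℝ p x v = p x from hv, hp1] at hzero

lemma exists_eq_zero_of_contDiff_of_eqOn_id_sphere {h : E → E} (hh : ContDiff ℝ 1 h)
    (hid : EqOn h id (sphere 0 1)) : ∃ x, h x = 0 := by
  by_contra! hne
  borelize E
  let p : E → E := fun x => ‖h x‖⁻¹ • h x
  have hp : ContDiff ℝ 1 p :=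
    ((hh.norm ℝ hne).inv fun x => norm_ne_zero_iff.mpr (hne x)).smul hh
  have hp1 (x : E) : ‖p x‖ = 1 := by
    rw [norm_smul, norm_inv, norm_norm, inv_mul_cancel₀ (norm_ne_zero_iff.mpr (hne x))]
  have hpid : ∀ x ∈ sphere (0 : E) 1, p x - x = 0 := fun x hx => by
    simp [p, hid hx, mem_sphere_zero_iff_norm.mp hx]
  have hderiv (x : E) : 1 + fderiv ℝ (fun y => p y - y) x = fderiv ℝ p x := by
    rw [fderiv_fun_sub (hp.differentiable one_ne_zero x) differentiableAt_fun_id, fderiv_fun_id]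
    exact add_sub_cancel _ _
  have hvol := integral_ball_det_one_add_fderiv volume (g := fun y => p y - y)
    (hp.sub contDiff_id) hpid
  simp only [hderiv, integral_zero,
    det_fderiv_eq_zero_of_norm_eq_one (hp.differentiable one_ne_zero _) hp1] at hvol
  exact (ENNReal.toReal_pos (measure_ball_pos volume (0 : E) one_pos).ne'
    measure_ball_lt_top.ne).ne hvol

lemma exists_eq_zero_of_contDiff_of_norm_sub_le {q : E → E} (hq : ContDiff ℝ 1 q) {k : ℝ}
    (hk : k < 1) (hqk : ∀ x ∈ closedBall 0 1, ‖q x - x‖ ≤ k) : ∃ x ∈ closedBall 0 1, q x = 0 := by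
  have hk0 : 0 ≤ k := (norm_nonneg _).trans (hqk 0 (mem_closedBall_self zero_le_one))
  let χ : ContDiffBump (0 : E) := ⟨(1 + k) / 2, 1, by linarith, by linarith⟩
  have hχ {x : E} (hx : 1 ≤ ‖x‖) : χ x = 0 := χ.zero_of_le_dist (by rwa [dist_zero_right])
  obtain ⟨x, hx⟩ := exists_eq_zero_of_contDiff_of_eqOn_id_sphere
    (h := fun x => x + χ x • (q x - x)) (contDiff_id.add (χ.contDiff.smul (hq.sub contDiff_id)))
    fun x hx => by simp [hχ (mem_sphere_zero_iff_norm.mp hx).ge]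
  have hx1 : x ∈ closedBall 0 1 := by
    rw [mem_closedBall_zero_iff]
    by_contra! h1
    rw [hχ h1.le, zero_smul, add_zero] at hx
    rw [hx, norm_zero] at h1
    exact h1.not_ge zero_le_one
  have hχx : χ x = 1 := by
    refine χ.one_of_mem_closedBall (mem_closedBall_zero_iff.mpr ?_)
    calc ‖x‖ = χ x * ‖q x - x‖ := by
          rw [eq_neg_of_add_eq_zero_left hx, norm_neg, norm_smul, Real.norm_of_nonneg χ.nonneg,
            ← eq_neg_of_add_eq_zero_left hx]
      _ ≤ ‖q x - x‖ := mul_le_of_le_one_left (norm_nonneg _) χ.le_one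
      _ ≤ (1 + k) / 2 := by linarith [hqk x hx1]
  rw [hχx, one_smul, add_sub_cancel] at hx
  exact ⟨x, hx1, hx⟩

lemma exists_eq_zero_of_norm_sub_le {h : E → E} (hh : ContinuousOn h (closedBall 0 1)) {k : ℝ}
    (hk : k < 1) (hhk : ∀ x ∈ closedBall 0 1, ‖h x - x‖ ≤ k) : ∃ x ∈ closedBall 0 1, h x = 0 := by
  by_contra! hne
  obtain ⟨m, hm, hhm⟩ := (isCompact_closedBall (0 : E) 1).exists_forall_le' hh.norm
    fun x hx => norm_pos_iff.mpr (hne x hx)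
  obtain ⟨H, hH⟩ := ContinuousMap.exists_restrict_eq (isClosed_closedBall (x := (0 : E)) (ε := 1))
    ⟨_, hh.domRestrict⟩
  have hHh : ∀ x ∈ closedBall (0 : E) 1, H x = h x := fun x hx => DFunLike.congr_fun hH ⟨x, hx⟩
  obtain ⟨q, hq, hqH, -⟩ := H.continuous.exists_contDiff_approx 1
    (ε := fun _ => min m ((1 - k) / 2)) continuous_const fun _ => by
      have : 0 < 1 - k := sub_pos.mpr hk
      positivity
  have hqh : ∀ x ∈ closedBall (0 : E) 1, ‖q x - h x‖ < m ∧ ‖q x - h x‖ < (1 - k) / 2 :=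
    fun x hx => by simpa [hHh x hx, dist_eq_norm] using hqH x
  obtain ⟨x, hx, hqx⟩ := exists_eq_zero_of_contDiff_of_norm_sub_le hq
    (by linarith : (1 + k) / 2 < 1) fun x hx => by
      linarith [norm_sub_le_norm_sub_add_norm_sub (q x) (h x) x, hhk x hx, (hqh x hx).2]
  have hlt := (hqh x hx).1
  rw [hqx, zero_sub, norm_neg] at hlt
  exact hlt.not_ge (hhm x hx)

/- If `f` had no fixed point it would move every point by at least some `δ > 0`; but a point with
`x = (1 + δ)⁻¹ • f x` is moved by less than `δ`. -/
theorem exists_isFixedPt_of_mapsTo_closedBall {f : E → E} (hf : ContinuousOn f (closedBall 0 1))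
    (hmaps : MapsTo f (closedBall 0 1) (closedBall 0 1)) :
    ∃ x ∈ closedBall 0 1, Function.IsFixedPt f x := by
  by_contra! hne
  obtain ⟨δ, hδ, hfδ⟩ := (isCompact_closedBall (0 : E) 1).exists_forall_le'
    (hf.sub continuousOn_id).norm fun x hx => norm_pos_iff.mpr (sub_ne_zero.mpr (hne x hx))
  have hf1 : ∀ x ∈ closedBall (0 : E) 1, ‖f x‖ ≤ 1 := fun x hx =>
    mem_closedBall_zero_iff.mp (hmaps hx)
  set c := (1 + δ)⁻¹ with hc
  have hc0 : 0 < c := by positivity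
  have hc1 : 1 - c = c * δ := by
    rw [hc]
    field_simp
    ring
  have hc2 : 0 < c * δ := mul_pos hc0 hδ
  obtain ⟨x, hx, hx0⟩ := exists_eq_zero_of_norm_sub_le (h := fun x => x - c • f x)
    (continuousOn_id.sub (hf.const_smul c)) (k := c) (by linarith) fun x hx => by
      rw [sub_sub_cancel_left, norm_neg, norm_smul, Real.norm_of_nonneg hc0.le]
      exact mul_le_of_le_one_right hc0.le (hf1 x hx)
  have : δ ≤ c * δ :=
    calc δ ≤ ‖f x - x‖ := hfδ x hx
      _ = ‖(1 - c) • f x‖ := by rw [sub_smul, one_smul, ← sub_eq_zero.mp hx0]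
      _ = c * δ * ‖f x‖ := by rw [norm_smul, hc1, Real.norm_of_nonneg hc2.le]
      _ ≤ c * δ := mul_le_of_le_one_right hc2.le (hf1 x hx)
  nlinarith

end Brouwer

/-! ### Invariance of domain -/

section InvarianceOfDomain

variable {E : Type*} [NormedAddCommGroup E]

section Approximation

variable [NormedSpace ℝ E]

lemma exists_norm_lt_notMem_image_of_measure_eq_zero [FiniteDimensional ℝ E] [MeasurableSpace E]
    [BorelSpace E] (μ : Measure E) [μ.IsAddHaarMeasure] {P : E → E} {S : Set E}
    (hP : DifferentiableOn ℝ P S) (hS : μ S = 0) {δ : ℝ} (hδ : 0 < δ) :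
    ∃ v, ‖v‖ < δ ∧ v ∉ P '' S := by
  have hnull := addHaar_image_eq_zero_of_differentiableOn_of_addHaar_eq_zero μ hP hS
  obtain ⟨v, hv, hvS⟩ := not_subset.mp fun hsub : ball (0 : E) δ ⊆ P '' S =>
    (measure_ball_pos μ 0 hδ).ne' (measure_mono_null hsub hnull)
  exact ⟨v, mem_ball_zero_iff.mp hv, hvS⟩

/-- The radial map of `E ∖ {c}` onto the complement of the open ball `ball c ε`, which pushes the
punctured ball to the sphere and fixes every other point; its value at `c` is the junk value `c`. -/
def radialPush (c : E) (ε : ℝ) (y : E) : E := c + max 1 (ε / ‖y - c‖) • (y - c)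

lemma continuousOn_radialPush (c : E) (ε : ℝ) : ContinuousOn (radialPush c ε) {c}ᶜ := by
  have hsub : ContinuousOn (fun y => y - c) {c}ᶜ := by fun_prop
  exact continuousOn_const.add ((continuousOn_const.sup (continuousOn_const.div hsub.norm
    fun y hy => norm_ne_zero_iff.mpr (sub_ne_zero.mpr hy))).smul hsub)

lemma radialPush_of_notMem_ball {c y : E} {ε : ℝ} (hε : 0 < ε) (hy : y ∉ ball c ε) :
    radialPush c ε y = y := by
  rw [mem_ball_iff_norm, not_lt] at hy
  rw [radialPush, max_eq_left ((div_le_one (hε.trans_le hy)).mpr hy), one_smul, add_sub_cancel]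

lemma radialPush_mem_sphere {c y : E} {ε : ℝ} (hy : y ∈ ball c ε) (hyc : y ≠ c) :
    radialPush c ε y ∈ sphere c ε := by
  have hpos : 0 < ‖y - c‖ := norm_pos_iff.mpr (sub_ne_zero.mpr hyc)
  rw [mem_ball_iff_norm] at hy
  rw [mem_sphere_iff_norm, radialPush, max_eq_right ((one_le_div hpos).mpr hy.le),
    add_sub_cancel_left, norm_smul, Real.norm_of_nonneg (div_nonneg (hpos.trans hy).le hpos.le),
    div_mul_cancel₀ _ hpos.ne']

/- A smooth approximation of `G` maps the null set `sphere c ε` to a null set, so a small constant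
shift makes it avoid `0` there; precomposing with `radialPush c ε` spreads this over `ball c ε`. -/
lemma exists_nonvanishing_approx [FiniteDimensional ℝ E] {G : E → E} (hG : Continuous G)
    {K : Set E} (hK : IsCompact K) {c : E} (hcK : c ∉ K) {ε η : ℝ} (hε : 0 < ε) (hη : 0 < η)
    (hGη : ∀ y ∈ closedBall c ε, ‖G y‖ ≤ η) (hG0 : ∀ y ∈ K \ ball c ε, G y ≠ 0) :
    ∃ g : E → E, ContinuousOn g K ∧ ∀ y ∈ K, g y ≠ 0 ∧ ‖g y - G y‖ ≤ 3 * η := by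
  borelize E
  obtain ⟨m, hm, hGm⟩ := (hK.diff isOpen_ball).exists_forall_le' hG.norm.continuousOn
    fun y hy => norm_pos_iff.mpr (hG0 y hy)
  set δ := min (m / 2) (η / 2)
  have hδ : 0 < δ := by positivity
  obtain ⟨P, hP, hPG, -⟩ := hG.exists_contDiff_approx 1 (ε := fun _ => δ) continuous_const
    fun _ => hδ
  obtain ⟨v, hv, hvP⟩ := exists_norm_lt_notMem_image_of_measure_eq_zero
    (Measure.addHaar : Measure E) (S := sphere c ε)
    (hP.differentiable one_ne_zero).differentiableOn
    (Measure.addHaar_sphere_of_ne_zero _ c hε.ne') hδ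
  have hPvG (y : E) : ‖P y - v - G y‖ < m ∧ ‖P y - v - G y‖ ≤ η := by
    have hPy := hPG y
    rw [dist_eq_norm] at hPy
    have := norm_sub_le (P y - G y) v
    rw [sub_right_comm] at this
    have h1 : δ ≤ m / 2 := min_le_left _ _
    have h2 : δ ≤ η / 2 := min_le_right _ _
    constructor <;> linarith
  refine ⟨fun y => P (radialPush c ε y) - v, ?_, fun y hy => ?_⟩
  · exact (hP.continuous.comp_continuousOn ((continuousOn_radialPush c ε).mono
      fun y hy hyc => hcK (hyc ▸ hy))).sub continuousOn_const
  by_cases hyc : y ∈ ball c ε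
  · have hpush := radialPush_mem_sphere hyc fun h => hcK (h ▸ hy)
    refine ⟨fun h => hvP ⟨_, hpush, sub_eq_zero.mp h⟩, ?_⟩
    linarith [norm_sub_le_norm_sub_add_norm_sub (P (radialPush c ε y) - v)
      (G (radialPush c ε y)) (G y), norm_sub_le (G (radialPush c ε y)) (G y),
      (hPvG (radialPush c ε y)).2, hGη _ (sphere_subset_closedBall hpush),
      hGη y (ball_subset_closedBall hyc)]
  · simp only [radialPush_of_notMem_ball hε hyc]
    refine ⟨fun h => ?_, by linarith [(hPvG y).2]⟩
    have := (hPvG y).1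
    rw [h, zero_sub, norm_neg] at this
    exact this.not_ge (hGm y ⟨hy, hyc⟩)

end Approximation

variable [InnerProductSpace ℝ E] [FiniteDimensional ℝ E]

/- Let `G` be a continuous extension of the inverse of `f`. If points `c` near `f 0` were missed
by `f`, then `G` could be perturbed to a map `g` without zeros on the image of `f`, and the self-map
`x ↦ x - g (f x)` of the ball would have no fixed point. -/
lemma image_closedBall_mem_nhds {f : E → E} (hf : ContinuousOn f (closedBall 0 1))
    (hinj : InjOn f (closedBall 0 1)) : f '' closedBall 0 1 ∈ 𝓝 (f 0) := by
  set K := f '' closedBall 0 1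
  have hK : IsCompact K := (isCompact_closedBall _ _).image_of_continuousOn hf
  obtain ⟨G, hG⟩ : ∃ G : C(E, E), ∀ x ∈ closedBall (0 : E) 1, G (f x) = x := by
    have : CompactSpace (closedBall (0 : E) 1) :=
      isCompact_iff_compactSpace.mp (isCompact_closedBall _ _)
    obtain ⟨G, hG⟩ := ContinuousMap.exists_extension'
      (hf.domRestrict.isClosedEmbedding (injOn_iff_injective.mp hinj))
      (⟨Subtype.val, continuous_subtype_val⟩ : C(closedBall (0 : E) 1, E))
    exact ⟨G, fun x hx => congrFun hG ⟨x, hx⟩⟩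
  have h0 : (0 : E) ∈ closedBall 0 1 := mem_closedBall_self zero_le_one
  obtain ⟨ε, hε, hGε⟩ : ∃ ε > 0, ∀ y, dist y (f 0) < ε → ‖G y‖ ≤ 1 / 3 := by
    obtain ⟨ε, hε, h⟩ := Metric.continuous_iff.mp G.continuous (f 0) (1 / 3) (by norm_num)
    refine ⟨ε, hε, fun y hy => ?_⟩
    simpa [hG 0 h0] using (h y hy).le
  refine Metric.mem_nhds_iff.mpr ⟨ε / 2, by positivity, fun c hc => ?_⟩
  by_contra hcK
  rw [mem_ball'] at hc
  obtain ⟨g, hg, hgK⟩ := exists_nonvanishing_approx G.continuous hK hcK (half_pos hε)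
    (by norm_num : (0 : ℝ) < 1 / 3)
    (fun y hy => hGε y (by linarith [dist_triangle_right y (f 0) c, mem_closedBall.mp hy]))
    (by
      rintro _ ⟨⟨x, hx, rfl⟩, hxc⟩ hGx
      rw [hG x hx] at hGx
      rw [hGx] at hxc
      exact hxc hc)
  obtain ⟨x, hx, hfix⟩ := exists_isFixedPt_of_mapsTo_closedBall (f := fun x => x - g (f x))
    (continuousOn_id.sub (hg.comp hf (mapsTo_image f _))) fun x hx => by
      have := (hgK (f x) (mem_image_of_mem f hx)).2
      rw [hG x hx, norm_sub_rev] at this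
      rw [mem_closedBall_zero_iff]
      linarith
  exact (hgK (f x) (mem_image_of_mem f hx)).1 (sub_eq_self.mp hfix)

theorem image_mem_nhds_of_injOn_of_continuousOn {f : E → E} {s : Set E} {x : E} (hs : s ∈ 𝓝 x)
    (hf : ContinuousOn f s) (hinj : InjOn f s) : f '' s ∈ 𝓝 (f x) := by
  obtain ⟨r, hr, hrs⟩ := Metric.nhds_basis_closedBall.mem_iff.mp hs
  have hmaps : MapsTo (fun z => x + r • z) (closedBall 0 1) s := fun z hz => hrs <| by
    rw [mem_closedBall_iff_norm, add_sub_cancel_left, norm_smul, Real.norm_of_nonneg hr.le]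
    exact mul_le_of_le_one_right hr.le (mem_closedBall_zero_iff.mp hz)
  have hinj' : Function.Injective fun z : E => x + r • z :=
    (add_right_injective x).comp (smul_right_injective E hr.ne')
  have himage := image_closedBall_mem_nhds (f := fun z => f (x + r • z))
    (hf.comp (by fun_prop) hmaps) (hinj.comp hinj'.injOn hmaps)
  rw [smul_zero, add_zero] at himage
  refine mem_of_superset himage ?_
  rintro _ ⟨z, hz, rfl⟩
  exact mem_image_of_mem f (hmaps hz)

theorem subset_closure_interior_of_homeomorph {s t : Set E} (φ : s ≃ₜ t)
    (ht : t ⊆ closure (interior t)) : s ⊆ closure (interior s) := by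
  intro y hy
  let f : E → E := Function.extend Subtype.val (fun z => (φ.symm z : E)) id
  have hfval (z : t) : f z = φ.symm z := Subtype.val_injective.extend_apply _ _ z
  have hmaps : MapsTo f t s := fun z hz => hfval ⟨z, hz⟩ ▸ (φ.symm ⟨z, hz⟩).2
  have hf : ContinuousOn f t := by
    rw [continuousOn_iff_continuous_domRestrict, show t.domRestrict f = _ from funext hfval]
    exact continuous_subtype_val.comp φ.symm.continuous
  have hinj : InjOn f t := fun z hz w hw h => by
    rw [hfval ⟨z, hz⟩, hfval ⟨w, hw⟩] at h
    exact congrArg Subtype.val (φ.symm.injective (Subtype.ext h))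
  have hint : MapsTo f (interior t) (interior s) := fun z hz =>
    mem_interior_iff_mem_nhds.mpr <| mem_of_superset
      (image_mem_nhds_of_injOn_of_continuousOn (mem_interior_iff_mem_nhds.mp hz) hf hinj)
      hmaps.image_subset
  have hy' : f (φ ⟨y, hy⟩) = y := by rw [hfval, φ.symm_apply_apply]
  rw [← hy']
  exact ((hf _ (φ ⟨y, hy⟩).2).mono interior_subset).mem_closure (ht (φ ⟨y, hy⟩).2) hint

end InvarianceOfDomain

section Tile

variable {d : ℕ} {m : Set (Pt d)}

lemma IsTile.subset_closure_interior (hm : IsTile d m) : m ⊆ closure (interior m) := by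
  obtain ⟨φ⟩ := hm
  refine subset_closure_interior_of_homeomorph φ ?_
  rw [interior_closedBall _ one_ne_zero, closure_ball _ one_ne_zero]

lemma IsTile.isCompact (hm : IsTile d m) : IsCompact m := by
  obtain ⟨φ⟩ := hm
  have := isCompact_iff_compactSpace.mp (isCompact_closedBall (0 : Pt d) 1)
  exact isCompact_iff_compactSpace.mpr φ.symm.compactSpace

lemma IsTile.nonempty (hm : IsTile d m) : m.Nonempty := by
  obtain ⟨φ⟩ := hm
  exact ⟨_, (φ.symm ⟨0, mem_closedBall_self zero_le_one⟩).2⟩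

end Tile

/-! ### Boxes -/

section Box

variable {d : ℕ} {a b a' b' : Fin d → ℝ} {B : Set (Pt d)} {r s : ℝ}

lemma boxSet_eq_preimage (a b : Fin d → ℝ) :
    boxSet d a b = (EuclideanSpace.equiv (Fin d) ℝ).toHomeomorph ⁻¹' Icc a b := by
  ext x
  exact ⟨fun h => ⟨fun j => (h j).1, fun j => (h j).2⟩, fun h j => ⟨h.1 j, h.2 j⟩⟩

lemma isClosed_boxSet (a b : Fin d → ℝ) : IsClosed (boxSet d a b) := by
  rw [boxSet_eq_preimage]
  exact isClosed_Icc.preimage (Homeomorph.continuous _)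

lemma interior_boxSet (a b : Fin d → ℝ) :
    interior (boxSet d a b) = {x | ∀ j, x j ∈ Ioo (a j) (b j)} := by
  rw [boxSet_eq_preimage, ← Homeomorph.preimage_interior, ← pi_univ_Icc,
    interior_pi_set finite_univ]
  ext x
  simp [Set.mem_pi]

lemma boxSet_subset_closure_interior (hab : ∀ j, a j < b j) :
    boxSet d a b ⊆ closure (interior (boxSet d a b)) := by
  rw [boxSet_eq_preimage, ← Homeomorph.preimage_interior, ← Homeomorph.preimage_closure,
    ← pi_univ_Icc, interior_pi_set finite_univ, closure_pi_set]
  refine preimage_mono (pi_mono fun j _ => ?_)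
  rw [interior_Icc, closure_Ioo (hab j).ne]

lemma volOf_boxSet (hab : ∀ j, a j ≤ b j) : volOf d (boxSet d a b) = ∏ j, (b j - a j) := by
  have hpre : boxSet d a b = (MeasurableEquiv.toLp 2 (Fin d → ℝ)).symm ⁻¹' Icc a b :=
    boxSet_eq_preimage a b
  rw [volOf, hpre,
    (EuclideanSpace.volume_preserving_symm_measurableEquiv_toLp (Fin d)).measure_preimage_equiv,
    Real.volume_Icc_pi_toReal hab]

lemma toLp_mem_boxSet {x : Fin d → ℝ} : WithLp.toLp 2 x ∈ boxSet d a b ↔ x ∈ Icc a b :=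
  ⟨fun h => ⟨fun j => (h j).1, fun j => (h j).2⟩, fun h j => ⟨h.1 j, h.2 j⟩⟩

lemma boxSet_subset_boxSet_iff (hab : a ≤ b) :
    boxSet d a b ⊆ boxSet d a' b' ↔ ∀ j, a' j ≤ a j ∧ b j ≤ b' j := by
  refine ⟨fun h j => ?_, fun h x hx j => ⟨(h j).1.trans (hx j).1, (hx j).2.trans (h j).2⟩⟩
  exact ⟨(h (toLp_mem_boxSet.mpr (left_mem_Icc.mpr hab)) j).1,
    (h (toLp_mem_boxSet.mpr (right_mem_Icc.mpr hab)) j).2⟩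

lemma image_coord_boxSet (hab : a ≤ b) (j : Fin d) :
    (fun x : Pt d => x j) '' boxSet d a b = Icc (a j) (b j) := by
  refine Subset.antisymm (image_subset_iff.mpr fun x hx => hx j) fun y hy => ?_
  refine ⟨WithLp.toLp 2 (Function.update a j y), toLp_mem_boxSet.mpr ⟨?_, ?_⟩, by simp⟩
  · exact le_update_iff.mpr ⟨hy.1, fun i _ => le_rfl⟩
  · exact update_le_iff.mpr ⟨hy.2, fun i _ => hab i⟩

lemma le_widthOf_boxSet_iff [NeZero d] (hab : a ≤ b) :
    r ≤ widthOf d (boxSet d a b) ↔ ∀ j, r ≤ b j - a j := by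
  rw [widthOf, le_ciInf_iff (finite_range _).bddBelow]
  simp only [image_coord_boxSet hab, csSup_Icc (hab _), csInf_Icc (hab _)]

lemma image_add_boxSet (t : Pt d) (a b : Fin d → ℝ) :
    (fun x => x + t) '' boxSet d a b = boxSet d (fun j => a j + t j) (fun j => b j + t j) := by
  rw [image_add_right]
  ext x
  exact forall_congr' fun j => and_congr le_add_neg_iff_add_le add_neg_le_iff_le_add

lemma dist_le_sqrt_mul_of_coord {x y : Pt d} (hs : 0 ≤ s) (h : ∀ j, dist (x j) (y j) ≤ s) :
    dist x y ≤ √d * s := by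
  rw [EuclideanSpace.dist_eq, ← Real.sqrt_sq hs, ← Real.sqrt_mul (Nat.cast_nonneg d)]
  refine Real.sqrt_le_sqrt ?_
  calc ∑ j, dist (x j) (y j) ^ 2 ≤ ∑ _j : Fin d, s ^ 2 := by
        gcongr with j
        exact h j
    _ = d * s ^ 2 := by simp

lemma boxSet_subset_closedBall (hs : 0 ≤ s) (hab : ∀ j, b j - a j ≤ s) :
    boxSet d a b ⊆ closedBall (WithLp.toLp 2 a) (√d * s) := fun x hx =>
  dist_le_sqrt_mul_of_coord hs fun j => by
    rw [Real.dist_eq, abs_of_nonneg (sub_nonneg.mpr (hx j).1)]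
    linarith [hab j, (hx j).2]

lemma closedBall_subset_boxSet {z : Pt d} (h : ∀ j, a j ≤ z j - r ∧ z j + r ≤ b j) :
    closedBall z r ⊆ boxSet d a b := fun x hx j => by
  have := (PiLp.norm_apply_le (x - z) j).trans (mem_closedBall_iff_norm.mp hx)
  rw [PiLp.sub_apply, Real.norm_eq_abs, abs_le] at this
  constructor <;> linarith [h j]

lemma le_and_le_of_boxSet_subset_closedBall {z : Pt d} (hab : a ≤ b)
    (h : boxSet d a b ⊆ closedBall z r) (j : Fin d) : z j - r ≤ a j ∧ b j ≤ z j + r :=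
  (boxSet_subset_boxSet_iff hab).mp
    (h.trans (closedBall_subset_boxSet fun _ => ⟨le_rfl, le_rfl⟩)) j

lemma IsBox.isClosed (hB : IsBox d B) : IsClosed B := by
  obtain ⟨a, b, -, rfl⟩ := hB
  exact isClosed_boxSet a b

lemma IsBox.subset_closure_interior (hB : IsBox d B) : B ⊆ closure (interior B) := by
  obtain ⟨a, b, hab, rfl⟩ := hB
  exact boxSet_subset_closure_interior hab

lemma IsBox.volOf_pos (hB : IsBox d B) : 0 < volOf d B := by
  obtain ⟨a, b, hab, rfl⟩ := hB
  rw [volOf_boxSet fun j => (hab j).le]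
  exact Finset.prod_pos fun j _ => sub_pos.mpr (hab j)

lemma IsRBox.isBox (hB : IsRBox d r B) : IsBox d B := by
  obtain ⟨a, b, hab, hB, -⟩ := hB
  exact ⟨a, b, hab, hB⟩

lemma IsRBox.pow_le_volOf (hr : 0 ≤ r) (hB : IsRBox d r B) : r ^ d ≤ volOf d B := by
  obtain ⟨a, b, hab, rfl, hr'⟩ := hB
  rw [volOf_boxSet fun j => (hab j).le, ← Fin.prod_const]
  exact Finset.prod_le_prod (fun _ _ => hr) fun j _ => (hr' j).1

lemma IsRBox.volOf_le (hB : IsRBox d r B) : volOf d B ≤ (2 * r) ^ d := by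
  obtain ⟨a, b, hab, rfl, hr'⟩ := hB
  rw [volOf_boxSet fun j => (hab j).le, ← Fin.prod_const]
  exact Finset.prod_le_prod (fun j _ => (sub_pos.mpr (hab j)).le) fun j _ => (hr' j).2

lemma isRBox_boxSet_iff (hr : 0 < r) :
    IsRBox d r (boxSet d a b) ↔ ∀ j, r ≤ b j - a j ∧ b j - a j ≤ 2 * r := by
  refine ⟨?_, fun h => ⟨a, b, fun j => sub_pos.mp (hr.trans_le (h j).1), rfl, h⟩⟩
  rintro ⟨a', b', hab', heq, hside⟩ j
  have hle' : a' ≤ b' := fun j => (hab' j).le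
  have hle : a ≤ b := fun j => by
    have ha' := heq.superset (toLp_mem_boxSet.mpr (left_mem_Icc.mpr hle')) j
    exact ha'.1.trans ha'.2
  obtain ⟨ha, hb⟩ := (boxSet_subset_boxSet_iff hle).mp heq.subset j
  obtain ⟨ha', hb'⟩ := (boxSet_subset_boxSet_iff hle').mp heq.superset j
  constructor <;> linarith [hside j]

end Box

/-! ### Patterns -/

section Pattern

variable {d : ℕ} {P Q M : Set (Set (Pt d))} {B B' S : Set (Pt d)} {t x z : Pt d} {r δ : ℝ}

lemma IsPattern.mono (hP : IsPattern d P) (hQP : Q ⊆ P) (hQ : Q.Nonempty) : IsPattern d Q :=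
  ⟨hP.1.subset hQP, hQ, fun m hm => hP.2.2.1 m (hQP hm), hP.2.2.2.mono hQP⟩

lemma IsPattern.isCompact_supp (hP : IsPattern d P) : IsCompact (supp d P) :=
  hP.1.isCompact_sUnion fun m hm => (hP.2.2.1 m hm).isCompact

lemma IsPattern.supp_nonempty (hP : IsPattern d P) : (supp d P).Nonempty := by
  obtain ⟨m, hm⟩ := hP.2.1
  exact (hP.2.2.1 m hm).nonempty.mono (subset_sUnion_of_mem hm)

lemma supp_patTrans : supp d (patTrans d t P) = (fun x => x + t) '' supp d P := by
  rw [supp, patTrans, sUnion_image, supp, sUnion_eq_biUnion, image_iUnion₂]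

lemma IsPattern.supp_patRestrict (hP : IsPattern d P) (hB : IsBox d B) (hBP : B ⊆ supp d P) :
    supp d (patRestrict d P B) = B := by
  refine Subset.antisymm (sUnion_subset ?_) ?_
  · rintro s ⟨m, -, -, rfl⟩
    exact inter_subset_right
  · have hfin : (patRestrict d P B).Finite :=
      (hP.1.image (· ∩ B)).subset fun s ⟨m, hm, _, hs⟩ => ⟨m, hm, hs.symm⟩
    have hclosed : IsClosed (supp d (patRestrict d P B)) := by
      rw [supp, sUnion_eq_biUnion]
      refine hfin.isClosed_biUnion ?_
      rintro s ⟨m, hm, -, rfl⟩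
      exact (hP.2.2.1 m hm).isCompact.isClosed.inter hB.isClosed
    refine hB.subset_closure_interior.trans (closure_minimal (fun x hx => ?_) hclosed)
    obtain ⟨m, hm, hxm⟩ := hBP (interior_subset hx)
    exact ⟨m ∩ B, ⟨m, hm, ⟨x, hxm, hx⟩, rfl⟩, hxm, interior_subset hx⟩

lemma patRestrict_patRestrict (hB : B' ⊆ B) :
    patRestrict d (patRestrict d P B) B' = patRestrict d P B' := by
  have hinter (m : Set (Pt d)) : m ∩ B ∩ B' = m ∩ B' := by
    rw [inter_assoc, inter_eq_self_of_subset_right hB]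
  have hint (m : Set (Pt d)) : m ∩ B ∩ interior B' = m ∩ interior B' := by
    rw [inter_assoc, inter_eq_self_of_subset_right (interior_subset.trans hB)]
  ext s
  constructor
  · rintro ⟨_, ⟨m, hm, -, rfl⟩, hmB', rfl⟩
    exact ⟨m, hm, hint m ▸ hmB', hinter m⟩
  · rintro ⟨m, hm, hmB', rfl⟩
    refine ⟨m ∩ B, ⟨m, hm, hmB'.mono ?_, rfl⟩, (hint m).symm ▸ hmB', (hinter m).symm⟩
    exact inter_subset_inter_right m (interior_mono hB)

lemma patRestrict_patTrans :
    patRestrict d (patTrans d t P) ((fun x => x + t) '' B) = patTrans d t (patRestrict d P B) := by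
  have hinj : Function.Injective fun x : Pt d => x + t := add_left_injective t
  have hint : interior ((fun x => x + t) '' B) = (fun x => x + t) '' interior B :=
    ((Homeomorph.addRight t).image_interior B).symm
  ext s
  constructor
  · rintro ⟨_, ⟨m, hm, rfl⟩, hmB, rfl⟩
    rw [hint, ← image_inter hinj, image_nonempty] at hmB
    exact ⟨m ∩ B, ⟨m, hm, hmB, rfl⟩, image_inter hinj⟩
  · rintro ⟨_, ⟨m, hm, hmB, rfl⟩, rfl⟩
    refine ⟨_, ⟨m, hm, rfl⟩, ?_, image_inter hinj⟩
    rw [hint, ← image_inter hinj]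
    exact hmB.image _

/- A tile of `Q` outside `P` meeting `interior B` would, being the closure of its interior, have an
interior point in `B`, hence in a tile of `P`, which is again the closure of its interior. -/
lemma IsPattern.patRestrict_eq_of_subset (hQ : IsPattern d Q) (hPQ : P ⊆ Q) (hB : B ⊆ supp d P) :
    patRestrict d Q B = patRestrict d P B := by
  refine Subset.antisymm ?_ fun s ⟨m, hm, hmB, hs⟩ => ⟨m, hPQ hm, hmB, hs⟩
  rintro s ⟨q, hq, ⟨y, hyq, hyB⟩, rfl⟩
  suffices hqP : q ∈ P from ⟨q, hqP, ⟨y, hyq, hyB⟩, rfl⟩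
  have hreg {m : Set (Pt d)} (hm : m ∈ Q) : m ⊆ closure (interior m) :=
    (hQ.2.2.1 m hm).subset_closure_interior
  obtain ⟨x, hxB, hxq⟩ := mem_closure_iff.mp (hreg hq hyq) _ isOpen_interior hyB
  obtain ⟨p, hp, hxp⟩ := hB (interior_subset hxB)
  obtain ⟨w, hwq, hwp⟩ := mem_closure_iff.mp (hreg (hPQ hp) hxp) _ isOpen_interior hxq
  have hqp : q = p := by
    by_contra hne
    exact (hQ.2.2.2 hq (hPQ hp) hne).subset ⟨hwq, hwp⟩
  exact hqp ▸ hp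

lemma IsPattern.patRestrict_image_add_of_patTrans_subset (hQ : IsPattern d Q)
    (hPQ : patTrans d t P ⊆ Q) (hB : B ⊆ supp d P) :
    patRestrict d Q ((fun x => x + t) '' B) = patTrans d t (patRestrict d P B) := by
  rw [← patRestrict_patTrans, hQ.patRestrict_eq_of_subset hPQ]
  exact supp_patTrans ▸ image_mono hB

lemma IsPattern.patRestrict_patRestrict_image_add (hQ : IsPattern d Q) (hPQ : patTrans d t P ⊆ Q)
    (hMP : supp d M ⊆ supp d P) (hPM : patRestrict d P (supp d M) = M)
    (hMB : (fun x => x + t) '' supp d M ⊆ B) :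
    patRestrict d (patRestrict d Q B) ((fun x => x + t) '' supp d M) = patTrans d t M := by
  rw [patRestrict_patRestrict hMB, hQ.patRestrict_image_add_of_patTrans_subset hPQ hMP, hPM]

lemma rOut_le (hP : (supp d P).Nonempty) (h : supp d P ⊆ closedBall x r) : rOut d P ≤ r :=
  csInf_le ⟨0, fun _ ⟨_, hy⟩ => nonempty_closedBall.mp (hP.mono hy)⟩ ⟨x, h⟩

lemma exists_supp_subset_closedBall_of_rOut_lt (hP : Bornology.IsBounded (supp d P))
    (hr : rOut d P < r) : ∃ x, supp d P ⊆ closedBall x r := by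
  obtain ⟨R, hR⟩ := hP.subset_closedBall 0
  obtain ⟨s, ⟨x, hx⟩, hs⟩ := exists_lt_of_csInf_lt (by exact ⟨R, 0, hR⟩) hr
  exact ⟨x, hx.trans (closedBall_subset_closedBall hs.le)⟩

lemma half_dist_le_rOut (hP : Bornology.IsBounded (supp d P)) (hx : x ∈ supp d P)
    (hz : z ∈ supp d P) : dist x z / 2 ≤ rOut d P := by
  obtain ⟨R, hR⟩ := hP.subset_closedBall 0
  refine le_csInf ⟨R, 0, hR⟩ ?_
  rintro s ⟨y, hy⟩
  linarith [dist_triangle_right x z y, mem_closedBall.mp (hy hx), mem_closedBall.mp (hy hz)]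

lemma le_rIn [NeZero d] (hP : Bornology.IsBounded (supp d P)) (h : closedBall x r ⊆ supp d P) :
    r ≤ rIn d P := by
  refine le_csSup ⟨diam (supp d P) / 2, ?_⟩ ⟨x, h⟩
  rintro s ⟨y, hy⟩
  rcases le_total s 0 with hs | hs
  · linarith [diam_nonneg (s := supp d P)]
  · linarith [diam_mono hy hP, diam_closedBall_eq y hs]

/-- The tiles of `P` that meet `S`. Passing to them cuts a pattern down to one whose outer radius is
comparable with the size of `S`, as is needed to apply linear repetitivity. -/
def tilesMeeting (P : Set (Set (Pt d))) (S : Set (Pt d)) : Set (Set (Pt d)) :=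
  {m ∈ P | (m ∩ S).Nonempty}

lemma tilesMeeting_subset : tilesMeeting P S ⊆ P := sep_subset _ _

lemma subset_supp_tilesMeeting (hS : S ⊆ supp d P) : S ⊆ supp d (tilesMeeting P S) := fun y hy => by
  obtain ⟨m, hm, hym⟩ := hS hy
  exact ⟨m, ⟨hm, y, hym, hy⟩, hym⟩

lemma supp_tilesMeeting_subset_closedBall (hδ : ∀ m ∈ P, ∀ x ∈ m, m ⊆ closedBall x δ)
    (hS : S ⊆ closedBall z r) : supp d (tilesMeeting P S) ⊆ closedBall z (r + δ) := by
  rintro y ⟨m, ⟨hm, x, hxm, hxS⟩, hym⟩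
  rw [mem_closedBall]
  linarith [dist_triangle y x z, mem_closedBall.mp (hδ m hm x hxm hym), mem_closedBall.mp (hS hxS)]

end Pattern

section Admissible

variable {d : ℕ} {Ps : Set (Set (Set (Pt d)))} {P Q M : Set (Set (Pt d))} {B : Set (Pt d)}
  {r : ℝ}

lemma Admissible.mem_of_subset (hadm : Admissible d Ps) (hP : P ∈ Ps) (hQP : Q ⊆ P)
    (hQ : Q.Nonempty) : Q ∈ Ps :=
  hadm.subClosed P hP Q ((hadm.pattern P hP).mono hQP hQ) hQP

/- On a one-point space every closed ball is the whole space, so `rIn` is the supremum of an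
unbounded set, i.e. the junk value `0`. -/
lemma Admissible.dim_ne_zero (hadm : Admissible d Ps) (hne : Ps.Nonempty) : d ≠ 0 := by
  rintro rfl
  obtain ⟨rmin, rmax, hrmin, -, hbounds⟩ := hadm.tileBounds
  obtain ⟨P, hP⟩ := hne
  obtain ⟨m, hm⟩ := (hadm.pattern P hP).2.1
  have hmPs : {m} ∈ Ps :=
    hadm.mem_of_subset hP (singleton_subset_iff.mpr hm) (singleton_nonempty m)
  obtain ⟨y, hy⟩ := (hadm.pattern _ hmPs).supp_nonempty
  have huniv : {r : ℝ | ∃ x : Pt 0, closedBall x r ⊆ supp 0 {m}} = univ :=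
    eq_univ_of_forall fun r => ⟨y, fun z _ => Subsingleton.elim y z ▸ hy⟩
  have hrIn : rIn 0 {m} = 0 := by rw [rIn, huniv, Real.sSup_univ]
  linarith [(hbounds m hmPs).1]

lemma Admissible.exists_tile_subset_closedBall (hadm : Admissible d Ps) :
    ∃ δ, ∀ P ∈ Ps, ∀ m ∈ P, ∀ x ∈ m, m ⊆ closedBall x δ := by
  obtain ⟨rmin, rmax, -, -, hbounds⟩ := hadm.tileBounds
  refine ⟨2 * (rmax + 1), fun P hP m hm x hx y hy => ?_⟩
  have hmPs : {m} ∈ Ps :=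
    hadm.mem_of_subset hP (singleton_subset_iff.mpr hm) (singleton_nonempty m)
  obtain ⟨z, hz⟩ := exists_supp_subset_closedBall_of_rOut_lt
    (hadm.pattern _ hmPs).isCompact_supp.isBounded
    ((hbounds m hmPs).2.2.trans_lt (lt_add_one rmax))
  rw [mem_closedBall]
  linarith [dist_triangle_right y x z, mem_closedBall.mp (hz ⟨m, rfl, hx⟩),
    mem_closedBall.mp (hz ⟨m, rfl, hy⟩)]

lemma rPatterns_subset_boxPatterns : RPatterns d Ps r ⊆ BoxPatterns d Ps := by
  rintro _ ⟨P, hP, B, hB, hBP, rfl⟩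
  exact ⟨P, hP, B, hB.isBox, hBP, rfl⟩

lemma Admissible.exists_eq_patRestrict_supp (hadm : Admissible d Ps) (hM : M ∈ BoxPatterns d Ps) :
    ∃ P ∈ Ps, supp d M ⊆ supp d P ∧ patRestrict d P (supp d M) = M := by
  obtain ⟨P, hP, B, hB, hBP, rfl⟩ := hM
  rw [(hadm.pattern P hP).supp_patRestrict hB hBP]
  exact ⟨P, hP, hBP, rfl⟩

lemma Admissible.isBox_supp (hadm : Admissible d Ps) (hM : M ∈ BoxPatterns d Ps) :
    IsBox d (supp d M) := by
  obtain ⟨P, hP, B, hB, hBP, rfl⟩ := hM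
  rwa [(hadm.pattern P hP).supp_patRestrict hB hBP]

lemma Admissible.isRBox_supp (hadm : Admissible d Ps) (hM : M ∈ RPatterns d Ps r) :
    IsRBox d r (supp d M) := by
  obtain ⟨P, hP, B, hB, hBP, rfl⟩ := hM
  rwa [(hadm.pattern P hP).supp_patRestrict hB.isBox hBP]

lemma Admissible.patVol_pos (hadm : Admissible d Ps) (hM : M ∈ BoxPatterns d Ps) :
    0 < patVol d M :=
  (hadm.isBox_supp hM).volOf_pos

lemma Admissible.supp_patRestrict (hadm : Admissible d Ps) (hM : M ∈ BoxPatterns d Ps)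
    (hB : IsBox d B) (hBM : B ⊆ supp d M) : supp d (patRestrict d M B) = B := by
  obtain ⟨P, hP, hMP, hPM⟩ := hadm.exists_eq_patRestrict_supp hM
  rw [← hPM, patRestrict_patRestrict hBM]
  exact (hadm.pattern P hP).supp_patRestrict hB (hBM.trans hMP)

lemma Admissible.patRestrict_mem_boxPatterns (hadm : Admissible d Ps) (hM : M ∈ BoxPatterns d Ps)
    (hB : IsBox d B) (hBM : B ⊆ supp d M) : patRestrict d M B ∈ BoxPatterns d Ps := by
  obtain ⟨P, hP, hMP, hPM⟩ := hadm.exists_eq_patRestrict_supp hM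
  exact ⟨P, hP, B, hB, hBM.trans hMP, by rw [← patRestrict_patRestrict (P := P) hBM, hPM]⟩

lemma Admissible.patRestrict_mem_rPatterns (hadm : Admissible d Ps) (hM : M ∈ BoxPatterns d Ps)
    (hB : IsRBox d r B) (hBM : B ⊆ supp d M) : patRestrict d M B ∈ RPatterns d Ps r := by
  obtain ⟨P, hP, hMP, hPM⟩ := hadm.exists_eq_patRestrict_supp hM
  exact ⟨P, hP, B, hB, hBM.trans hMP, by rw [← patRestrict_patRestrict (P := P) hBM, hPM]⟩

lemma Admissible.rPatterns_nonempty (hadm : Admissible d Ps) (hne : Ps.Nonempty) (hr : 0 < r) :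
    (RPatterns d Ps r).Nonempty := by
  obtain ⟨P, hP⟩ := hne
  obtain ⟨x, hx⟩ := (hadm.pattern P hP).supp_nonempty
  have hzero : (0 : Pt d) ∈ supp d (patTrans d (-x) P) :=
    supp_patTrans ▸ ⟨x, hx, add_neg_cancel x⟩
  obtain ⟨Q, hQ, -, hball⟩ :=
    hadm.extend _ (hadm.transClosed (-x) P hP) hzero (√d * r + 1) (by positivity)
  have hbox : IsRBox d r (boxSet d 0 fun _ => r) :=
    (isRBox_boxSet_iff hr).mpr fun _ => by
      simp only [Pi.zero_apply, sub_zero]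
      exact ⟨le_rfl, by linarith⟩
  have hsub : boxSet d 0 (fun _ => r) ⊆ closedBall 0 (√d * r) :=
    boxSet_subset_closedBall hr.le fun _ => (sub_zero r).le
  refine ⟨_, Q, hQ, _, hbox, hsub.trans (Subset.trans ?_ hball), rfl⟩
  exact closedBall_subset_closedBall (by linarith)

end Admissible

/-! ### Occurrences of box patterns in larger box patterns -/

section Occurrence

variable {d : ℕ} {Ps : Set (Set (Set (Pt d)))} {M N : Set (Set (Pt d))} {z : Pt d} {r R δ : ℝ}

lemma Admissible.exists_patRestrict_supp_eq_and_rOut_le (hadm : Admissible d Ps)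
    (hδ : ∀ P ∈ Ps, ∀ m ∈ P, ∀ x ∈ m, m ⊆ closedBall x δ) (hM : M ∈ BoxPatterns d Ps)
    (hMR : supp d M ⊆ closedBall z R) :
    ∃ P ∈ Ps, supp d M ⊆ supp d P ∧ patRestrict d P (supp d M) = M ∧ rOut d P ≤ R + δ := by
  obtain ⟨P, hP, hMP, hPM⟩ := hadm.exists_eq_patRestrict_supp hM
  have hcover : supp d M ⊆ supp d (tilesMeeting P (supp d M)) := subset_supp_tilesMeeting hMP
  have hmem : tilesMeeting P (supp d M) ∈ Ps := by
    refine hadm.mem_of_subset hP tilesMeeting_subset ?_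
    obtain ⟨a, b, hab, hbox⟩ := hadm.isBox_supp hM
    have ha : WithLp.toLp 2 a ∈ supp d M :=
      hbox ▸ toLp_mem_boxSet.mpr (left_mem_Icc.mpr fun j => (hab j).le)
    obtain ⟨m, hm, -⟩ := hcover ha
    exact ⟨m, hm⟩
  refine ⟨_, hmem, hcover, ?_, ?_⟩
  · rw [← (hadm.pattern P hP).patRestrict_eq_of_subset tilesMeeting_subset hcover, hPM]
  · exact rOut_le (hadm.pattern _ hmem).supp_nonempty
      (supp_tilesMeeting_subset_closedBall (hδ P hP) hMR)

lemma LinearlyRepetitive.exists_occurrence_in_closedBall [NeZero d] (hlr : LinearlyRepetitive d Ps)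
    (hadm : Admissible d Ps) (hδ : ∀ P ∈ Ps, ∀ m ∈ P, ∀ x ∈ m, m ⊆ closedBall x δ) :
    ∃ c > 0, ∀ P ∈ Ps, 1 ≤ rOut d P → ∀ Q ∈ Ps, ∀ z, closedBall z (c * rOut d P) ⊆ supp d Q →
      ∃ t, patTrans d t P ⊆ Q ∧ supp d (patTrans d t P) ⊆ closedBall z (c * rOut d P + δ) := by
  obtain ⟨c, hc, hrep⟩ := hlr
  refine ⟨c, hc, fun P hP hPone Q hQ z hball => ?_⟩
  have hcover := subset_supp_tilesMeeting hball
  have hmem : tilesMeeting Q (closedBall z (c * rOut d P)) ∈ Ps := by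
    refine hadm.mem_of_subset hQ tilesMeeting_subset ?_
    obtain ⟨m, hm, -⟩ := hcover (mem_closedBall_self (by positivity))
    exact ⟨m, hm⟩
  obtain ⟨t, ht⟩ := hrep P hP hPone _ hmem
    (le_rIn (hadm.pattern _ hmem).isCompact_supp.isBounded hcover)
  exact ⟨t, ht.trans tilesMeeting_subset,
    (sUnion_mono ht).trans (supp_tilesMeeting_subset_closedBall (hδ Q hQ) Subset.rfl)⟩

lemma Admissible.exists_subpattern_rOut_mem_Icc [NeZero d] (hadm : Admissible d Ps)
    (hδ : ∀ P ∈ Ps, ∀ m ∈ P, ∀ x ∈ m, m ⊆ closedBall x δ) (hr : 2 ≤ r) (hδr : δ ≤ r)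
    (hM : M ∈ RPatterns d Ps r) :
    ∃ P ∈ Ps, supp d M ⊆ supp d P ∧ patRestrict d P (supp d M) = M ∧
      rOut d P ∈ Icc 1 ((2 * √d + 1) * r) := by
  obtain ⟨a, b, hab, hbox, hside⟩ := hadm.isRBox_supp hM
  obtain ⟨P, hP, hMP, hPM, hrOut⟩ := hadm.exists_patRestrict_supp_eq_and_rOut_le hδ
    (rPatterns_subset_boxPatterns hM)
    (hbox ▸ boxSet_subset_closedBall (by linarith) fun j => (hside j).2)
  refine ⟨P, hP, hMP, hPM, ?_, by linarith⟩
  have hle : a ≤ b := fun j => (hab j).le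
  rw [hbox] at hMP
  have hhalf := half_dist_le_rOut (hadm.pattern P hP).isCompact_supp.isBounded
    (hMP (toLp_mem_boxSet.mpr (right_mem_Icc.mpr hle)))
    (hMP (toLp_mem_boxSet.mpr (left_mem_Icc.mpr hle)))
  have hcoord : b 0 - a 0 ≤ dist (WithLp.toLp 2 b : Pt d) (WithLp.toLp 2 a) :=
    (le_abs_self _).trans ((PiLp.norm_apply_le (WithLp.toLp 2 b - WithLp.toLp 2 a : Pt d)
      0).trans_eq (dist_eq_norm _ _).symm)
  linarith [(hside 0).1]

/- A copy of `M` found near the centre of `N` sits in a ball of radius `(c * (2 * √d + 1) + 1) * r`,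
while `N` contains the ball of radius `(c * (2 * √d + 1) + 2) * r`. -/
theorem LinearlyRepetitive.exists_occurrence_in_rPattern [NeZero d]
    (hlr : LinearlyRepetitive d Ps) (hadm : Admissible d Ps) :
    ∃ K, 1 ≤ K ∧ ∀ᶠ r in atTop, ∀ M ∈ RPatterns d Ps r, ∀ N ∈ RPatterns d Ps (K * r),
      ∀ a b a' b', supp d M = boxSet d a b → supp d N = boxSet d a' b' →
      ∃ t : Pt d, (∀ j, a' j + r ≤ a j + t j ∧ b j + t j + r ≤ b' j) ∧
        patRestrict d N ((fun x => x + t) '' supp d M) = patTrans d t M := by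
  obtain ⟨δ, hδ⟩ := hadm.exists_tile_subset_closedBall
  obtain ⟨c, hc, hocc⟩ := hlr.exists_occurrence_in_closedBall hadm hδ
  set ρ : ℝ := c * (2 * √d + 1) with hρ
  have hρ0 : 0 ≤ ρ := by positivity
  refine ⟨2 * (ρ + 2), by linarith, ?_⟩
  filter_upwards [eventually_ge_atTop 2, eventually_ge_atTop δ] with r hr hδr
  intro M hM N hN a b a' b' hMbox hNbox
  obtain ⟨P, hP, hMP, hPM, hPone, hPle⟩ := hadm.exists_subpattern_rOut_mem_Icc hδ hr hδr hM
  obtain ⟨Q, hQ, hNQ, hQN⟩ := hadm.exists_eq_patRestrict_supp (rPatterns_subset_boxPatterns hN)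
  set z : Pt d := WithLp.toLp 2 fun j => (a' j + b' j) / 2
  have hcρ : c * rOut d P ≤ ρ * r := by
    rw [hρ, mul_assoc]
    gcongr
  have hsideM := (isRBox_boxSet_iff (by linarith)).mp (hMbox ▸ hadm.isRBox_supp hM)
  have hsideN := (isRBox_boxSet_iff (by nlinarith)).mp (hNbox ▸ hadm.isRBox_supp hN)
  have hzN (j) : z j + (ρ + 2) * r ≤ b' j ∧ a' j ≤ z j - (ρ + 2) * r := by
    constructor <;> linarith [hsideN j, show z j = (a' j + b' j) / 2 from rfl]
  have hball : closedBall z (c * rOut d P) ⊆ supp d N := hNbox ▸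
    closedBall_subset_boxSet fun j => by constructor <;> linarith [hzN j]
  obtain ⟨t, htQ, htball⟩ := hocc P hP hPone Q hQ z (hball.trans hNQ)
  have hcopy : (fun x => x + t) '' supp d M ⊆ closedBall z (c * rOut d P + δ) :=
    (image_mono hMP).trans (supp_patTrans ▸ htball)
  have hmargin (j) : a' j + r ≤ a j + t j ∧ b j + t j + r ≤ b' j := by
    rw [hMbox, image_add_boxSet] at hcopy
    have hle (j) : a j + t j ≤ b j + t j := by linarith [hsideM j]
    constructor <;> linarith [hzN j, le_and_le_of_boxSet_subset_closedBall hle hcopy j]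
  have hsub : (fun x => x + t) '' supp d M ⊆ supp d N := by
    rw [hMbox, image_add_boxSet, hNbox]
    exact fun x hx j => ⟨by linarith [hmargin j, (hx j).1], by linarith [hmargin j, (hx j).2]⟩
  exact ⟨t, hmargin, hQN ▸
    (hadm.pattern Q hQ).patRestrict_patRestrict_image_add htQ hMP hPM hsub⟩

end Occurrence

/-! ### Grid decompositions -/

section Grid

variable {d : ℕ} {x : Fin d → ℕ → ℝ} {k σ τ : Fin d → ℕ}

/-- The cell with index `σ` of the grid that cuts the `j`-th axis at `x j 0`, `x j 1`, … . -/
def gridCell (x : Fin d → ℕ → ℝ) (σ : Fin d → ℕ) : Set (Pt d) :=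
  boxSet d (fun j => x j (σ j)) fun j => x j (σ j + 1)

/-- The indices of the cells of a grid with `k j` intervals along the `j`-th axis. -/
def gridIndices (k : Fin d → ℕ) : Finset (Fin d → ℕ) :=
  Fintype.piFinset fun j => Finset.range (k j)

lemma mem_gridIndices : σ ∈ gridIndices k ↔ ∀ j, σ j < k j := by
  simp only [gridIndices, Fintype.mem_piFinset, Finset.mem_range]

lemma gridCell_subset (hx : ∀ j, Monotone (x j)) (hσ : σ ∈ gridIndices k) :
    gridCell x σ ⊆ boxSet d (fun j => x j 0) fun j => x j (k j) := fun _ hy j =>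
  ⟨(hx j (Nat.zero_le _)).trans (hy j).1, (hy j).2.trans (hx j (mem_gridIndices.mp hσ j))⟩

lemma biUnion_gridCell (hx : ∀ j, Monotone (x j)) (hk : ∀ j, 0 < k j) :
    ⋃ σ ∈ gridIndices k, gridCell x σ = boxSet d (fun j => x j 0) fun j => x j (k j) := by
  refine Subset.antisymm (iUnion₂_subset fun σ hσ => gridCell_subset hx hσ) fun y hy => ?_
  have hcell (j) : ∃ i < k j, y j ∈ Icc (x j i) (x j (i + 1)) := by
    rcases (hy j).1.eq_or_lt with h0 | h0
    · exact ⟨0, hk j, h0.le, h0.ge.trans (hx j (Nat.zero_le _))⟩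
    · have hmem : y j ∈ ⋃ i ∈ Ico 0 (k j), Ioc (x j i) (x j (i + 1)) :=
        ((hx j).biUnion_Ico_Ioc_map_succ 0 (k j)).superset ⟨h0, (hy j).2⟩
      obtain ⟨i, hi, hyi⟩ := mem_iUnion₂.mp hmem
      exact ⟨i, hi.2, Ioc_subset_Icc_self hyi⟩
  choose σ hσ hyσ using hcell
  exact mem_iUnion₂.mpr ⟨σ, mem_gridIndices.mpr hσ, hyσ⟩

lemma interior_gridCell_inter (hx : ∀ j, Monotone (x j)) (hστ : σ ≠ τ) :
    interior (gridCell x σ) ∩ interior (gridCell x τ) = ∅ := by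
  obtain ⟨j, hj⟩ := Function.ne_iff.mp hστ
  rw [gridCell, gridCell, interior_boxSet, interior_boxSet, eq_empty_iff_forall_notMem]
  rintro y ⟨hyσ, hyτ⟩
  rcases hj.lt_or_gt with h | h
  · linarith [hx j h, (hyσ j).2, (hyτ j).1]
  · linarith [hx j h, (hyσ j).1, (hyτ j).2]

lemma sum_volOf_gridCell (hx : ∀ j, Monotone (x j)) :
    ∑ σ ∈ gridIndices k, volOf d (gridCell x σ) =
      volOf d (boxSet d (fun j => x j 0) fun j => x j (k j)) := by
  rw [volOf_boxSet fun j => hx j (Nat.zero_le _)]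
  simp_rw [← Finset.sum_range_sub, Finset.prod_univ_sum]
  exact Finset.sum_congr rfl fun σ _ => volOf_boxSet fun j => hx j (Nat.le_succ _)

end Grid

section Subadditive

variable {d : ℕ} {Ps : Set (Set (Set (Pt d)))} {M : Set (Set (Pt d))} {F : Set (Set (Pt d)) → ℝ}
  {dF rF r : ℝ} {cF : ℝ → ℝ}

lemma SubadditiveOn.le_sum {ι : Type*} {s : Finset ι} {B : ι → Set (Pt d)}
    (hF : SubadditiveOn d Ps F dF rF cF) (hM : M ∈ BoxPatterns d Ps)
    (hB : ∀ i ∈ s, IsBox d (B i))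
    (hdisj : (s : Set ι).Pairwise fun i i' => interior (B i) ∩ interior (B i') = ∅)
    (hcover : ⋃ i ∈ s, B i = supp d M) (hwidth : ∀ i ∈ s, rF ≤ widthOf d (B i)) :
    F M ≤ ∑ i ∈ s, (F (patRestrict d M (B i)) + cF (widthOf d (B i)) * volOf d (B i)) := by
  let e := s.equivFin.symm
  have hinj (i i') (h : i ≠ i') : (e i : ι) ≠ e i' := fun heq =>
    h (e.injective (Subtype.ext heq))
  have hcover' : ⋃ i, B (e i) = supp d M := by
    rw [← hcover, e.surjective.iUnion_comp fun i : s => B i, iUnion_subtype]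
  have := hF.subadd M hM _ (fun i => B (e i)) (fun i => hB _ (e i).2)
    (fun i i' h => hdisj (e i).2 (e i').2 (hinj i i' h)) hcover' fun i => hwidth _ (e i).2
  rw [← Finset.sum_add_distrib] at this
  rwa [← Finset.sum_coe_sort, ← e.sum_comp]

lemma SubadditiveOn.le_sum_gridCell [NeZero d] {x : Fin d → ℕ → ℝ} {k : Fin d → ℕ}
    (hF : SubadditiveOn d Ps F dF rF cF) (hM : M ∈ BoxPatterns d Ps) (hr : 0 < r) (hrF : rF ≤ r)
    (hstep : ∀ j i, r ≤ x j (i + 1) - x j i) (hk : ∀ j, 0 < k j)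
    (hbox : supp d M = boxSet d (fun j => x j 0) fun j => x j (k j)) (u : ℝ) :
    F M ≤ (u + cF r) * patVol d M +
      ∑ σ ∈ gridIndices k, (F (patRestrict d M (gridCell x σ)) - u * volOf d (gridCell x σ)) := by
  have hlt (j i) : x j i < x j (i + 1) := by linarith [hstep j i]
  have hmono (j) : Monotone (x j) := monotone_nat_of_le_succ fun i => (hlt j i).le
  have hwidth (σ) : r ≤ widthOf d (gridCell x σ) :=
    (le_widthOf_boxSet_iff fun j => (hlt j _).le).mpr fun j => hstep j _
  have herror (σ) : cF (widthOf d (gridCell x σ)) * volOf d (gridCell x σ) ≤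
      cF r * volOf d (gridCell x σ) :=
    mul_le_mul_of_nonneg_right (hF.cF_anti _ _ hrF (hwidth σ)) ENNReal.toReal_nonneg
  calc F M ≤ ∑ σ ∈ gridIndices k, (F (patRestrict d M (gridCell x σ)) +
        cF (widthOf d (gridCell x σ)) * volOf d (gridCell x σ)) :=
      hF.le_sum hM (fun σ _ => ⟨_, _, fun j => hlt j _, rfl⟩)
        (fun σ _ τ _ hστ => interior_gridCell_inter hmono hστ)
        (by rw [biUnion_gridCell hmono hk, hbox]) fun σ _ => hrF.trans (hwidth σ)
    _ ≤ ∑ σ ∈ gridIndices k, (F (patRestrict d M (gridCell x σ)) + cF r * volOf d (gridCell x σ)) :=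
      Finset.sum_le_sum fun σ _ => by linarith [herror σ]
    _ = _ := by
      rw [patVol, hbox, ← sum_volOf_gridCell hmono, Finset.mul_sum, ← Finset.sum_add_distrib]
      exact Finset.sum_congr rfl fun σ _ => by ring

end Subadditive

/-! ### Convergence of the upper and lower means -/

section Limit

lemma exists_tendsto_of_eventually_forall_ge_le_add {ι : Type*} [Preorder ι] [IsDirectedOrder ι]
    [Nonempty ι] {f c : ι → ℝ} (hf : IsBoundedUnder (· ≥ ·) atTop f)
    (hc : Tendsto c atTop (𝓝 0)) (h : ∀ᶠ r in atTop, ∀ s ≥ r, f s ≤ f r + c r) :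
    ∃ L, Tendsto f atTop (𝓝 L) := by
  have hbdd : IsBoundedUnder (· ≤ ·) atTop f := by
    obtain ⟨r, hr⟩ := h.exists
    exact ⟨f r + c r, eventually_map.mpr (mem_of_superset (Ici_mem_atTop r) hr)⟩
  refine ⟨liminf f atTop, tendsto_of_le_liminf_of_limsup_le le_rfl ?_ hbdd hf⟩
  refine le_of_forall_pos_le_add fun ε hε => ?_
  have hfreq : ∃ᶠ r in atTop, f r < liminf f atTop + ε / 2 :=
    frequently_lt_of_liminf_lt hbdd.isCoboundedUnder_ge (by linarith)
  obtain ⟨r, hfr, hrs, hcr⟩ :=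
    (hfreq.and_eventually (h.and (hc.eventually_lt_const (half_pos hε)))).exists
  refine limsup_le_of_le hf.isCoboundedUnder_le ?_
  filter_upwards [Ici_mem_atTop r] with s hs
  linarith [hrs s hs]

lemma exists_nat_le_div_le_two_mul {r l : ℝ} (hr : 0 < r) (hl : r ≤ l) :
    ∃ n : ℕ, 0 < n ∧ r ≤ l / n ∧ l / n ≤ 2 * r := by
  have hone : 1 ≤ ⌊l / r⌋₊ := Nat.le_floor (by rwa [Nat.cast_one, one_le_div hr])
  have hcast : (1 : ℝ) ≤ ⌊l / r⌋₊ := by exact_mod_cast hone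
  refine ⟨⌊l / r⌋₊, hone, ?_, ?_⟩
  · rw [le_div_comm₀ hr (by linarith)]
    exact Nat.floor_le (div_nonneg (hr.le.trans hl) hr.le)
  · have hlt : l < (⌊l / r⌋₊ + 1) * r := (div_lt_iff₀ hr).mp (Nat.lt_floor_add_one _)
    rw [div_le_iff₀ (by linarith)]
    nlinarith

end Limit

section Means

variable {d : ℕ} {Ps : Set (Set (Set (Pt d)))} {M N : Set (Set (Pt d))} {F : Set (Set (Pt d)) → ℝ}
  {dF rF r K L : ℝ} {cF : ℝ → ℝ} {a b a' b' : Fin d → ℝ}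

lemma SubadditiveOn.cF_nonneg (hF : SubadditiveOn d Ps F dF rF cF) (hr : rF ≤ r) : 0 ≤ cF r :=
  le_of_tendsto hF.cF_lim <| mem_of_superset (Ici_mem_atTop r) fun s hs => hF.cF_anti r s hr hs

lemma SubadditiveOn.abs_div_patVol_le (hF : SubadditiveOn d Ps F dF rF cF)
    (hadm : Admissible d Ps) (hM : M ∈ BoxPatterns d Ps) : |F M / patVol d M| ≤ dF := by
  have hpos := hadm.patVol_pos hM
  rw [abs_div, abs_of_pos hpos, div_le_iff₀ hpos]
  exact hF.bound M hM

lemma SubadditiveOn.div_patVol_le_Fplus (hF : SubadditiveOn d Ps F dF rF cF)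
    (hadm : Admissible d Ps) (hM : M ∈ RPatterns d Ps r) : F M / patVol d M ≤ Fplus d Ps F r := by
  refine le_csSup ⟨dF, forall_mem_image.mpr fun N hN => ?_⟩ (mem_image_of_mem _ hM)
  exact (abs_le.mp (hF.abs_div_patVol_le hadm (rPatterns_subset_boxPatterns hN))).2

lemma SubadditiveOn.Fminus_le_div_patVol (hF : SubadditiveOn d Ps F dF rF cF)
    (hadm : Admissible d Ps) (hM : M ∈ RPatterns d Ps r) :
    Fminus d Ps F r ≤ F M / patVol d M := by
  refine csInf_le ⟨-dF, forall_mem_image.mpr fun N hN => ?_⟩ (mem_image_of_mem _ hM)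
  exact (abs_le.mp (hF.abs_div_patVol_le hadm (rPatterns_subset_boxPatterns hN))).1

/- Cut the box into congruent cells that are themselves `r`-boxes. -/
lemma SubadditiveOn.le_Fplus_add_mul_patVol [NeZero d] (hF : SubadditiveOn d Ps F dF rF cF)
    (hadm : Admissible d Ps) (hM : M ∈ BoxPatterns d Ps) (hbox : supp d M = boxSet d a b)
    (hr : 0 < r) (hrF : rF ≤ r) (hside : ∀ j, r ≤ b j - a j) :
    F M ≤ (Fplus d Ps F r + cF r) * patVol d M := by
  choose n hn hle hge using fun j => exists_nat_le_div_le_two_mul hr (hside j)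
  let x (j : Fin d) (i : ℕ) : ℝ := a j + i * ((b j - a j) / n j)
  have hstep (j i) : x j (i + 1) - x j i = (b j - a j) / n j := by
    simp only [x]; push_cast; ring
  have hmono (j) : Monotone (x j) :=
    monotone_nat_of_le_succ fun i => by linarith [hstep j i, hle j]
  have hgrid : supp d M = boxSet d (fun j => x j 0) fun j => x j (n j) := by
    have hend (j) : (n j : ℝ) * ((b j - a j) / n j) = b j - a j :=
      mul_div_cancel₀ _ (by exact_mod_cast (hn j).ne')
    simpa only [x, hend, Nat.cast_zero, zero_mul, add_zero, add_sub_cancel] using hbox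
  have hcell : ∀ σ ∈ gridIndices n, F (patRestrict d M (gridCell x σ)) -
      Fplus d Ps F r * volOf d (gridCell x σ) ≤ 0 := fun σ hσ => by
    have hrBox : IsRBox d r (gridCell x σ) := (isRBox_boxSet_iff hr).mpr fun j => by
      rw [hstep]; exact ⟨hle j, hge j⟩
    have hsub : gridCell x σ ⊆ supp d M := hgrid ▸ gridCell_subset hmono hσ
    have hmem := hadm.patRestrict_mem_rPatterns hM hrBox hsub
    have hmean := hF.div_patVol_le_Fplus hadm hmem
    rw [div_le_iff₀ (hadm.patVol_pos (rPatterns_subset_boxPatterns hmem)), patVol,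
      hadm.supp_patRestrict hM hrBox.isBox hsub] at hmean
    exact sub_nonpos.mpr hmean
  have hsum := hF.le_sum_gridCell hM hr hrF (fun j i => (hstep j i).symm ▸ hle j) hn hgrid
    (Fplus d Ps F r)
  linarith [Finset.sum_nonpos hcell]

lemma SubadditiveOn.exists_tendsto_Fplus [NeZero d] (hF : SubadditiveOn d Ps F dF rF cF)
    (hadm : Admissible d Ps) (hne : Ps.Nonempty) : ∃ L, Tendsto (Fplus d Ps F) atTop (𝓝 L) := by
  refine exists_tendsto_of_eventually_forall_ge_le_add ⟨-dF, eventually_map.mpr ?_⟩ hF.cF_lim ?_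
  · filter_upwards [eventually_gt_atTop 0] with r hr
    obtain ⟨M, hM⟩ := hadm.rPatterns_nonempty hne hr
    have hbound := hF.abs_div_patVol_le hadm (rPatterns_subset_boxPatterns hM)
    exact (abs_le.mp hbound).1.trans (hF.div_patVol_le_Fplus hadm hM)
  · filter_upwards [eventually_gt_atTop 0, eventually_ge_atTop rF] with r hr hrF s hrs
    refine csSup_le ((hadm.rPatterns_nonempty hne (hr.trans_le hrs)).image _) ?_
    refine forall_mem_image.mpr fun M hM => ?_
    have hMbox := rPatterns_subset_boxPatterns hM
    obtain ⟨a, b, -, hbox, hside⟩ := hadm.isRBox_supp hM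
    rw [div_le_iff₀ (hadm.patVol_pos hMbox)]
    exact hF.le_Fplus_add_mul_patVol hadm hMbox hbox hr hrF fun j => hrs.trans (hside j).1

/- Cut each axis at the ends of the inner box: the inner box is the central one of the `3 ^ d`
cells, and on the others `le_Fplus_add_mul_patVol` applies. -/
lemma SubadditiveOn.le_add_patRestrict_inner_box [NeZero d] (hF : SubadditiveOn d Ps F dF rF cF)
    (hadm : Admissible d Ps) (hN : N ∈ BoxPatterns d Ps) (hbox : supp d N = boxSet d a' b')
    (hr : 0 < r) (hrF : rF ≤ r) (hleft : ∀ j, a' j + r ≤ a j) (hside : ∀ j, r ≤ b j - a j)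
    (hright : ∀ j, b j + r ≤ b' j) :
    F N ≤ (Fplus d Ps F r + 2 * cF r) * patVol d N +
      (F (patRestrict d N (boxSet d a b)) -
        (Fplus d Ps F r + cF r) * volOf d (boxSet d a b)) := by
  let x (j : Fin d) : ℕ → ℝ
    | 0 => a' j
    | 1 => a j
    | 2 => b j
    | i + 3 => b' j + i * r
  have hstep : ∀ j i, r ≤ x j (i + 1) - x j i
    | j, 0 => by linarith [hleft j]
    | j, 1 => hside j
    | j, 2 => by simp only [x]; push_cast; linarith [hright j]
    | j, i + 3 => by simp only [x]; push_cast; linarith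
  have hlt (j i) : x j i < x j (i + 1) := by linarith [hstep j i]
  have hmono (j) : Monotone (x j) := monotone_nat_of_le_succ fun i => (hlt j i).le
  have hgrid : supp d N = boxSet d (fun j => x j 0) fun j => x j 3 := by
    simpa only [x, Nat.cast_zero, zero_mul, add_zero] using hbox
  have hcell : ∀ σ ∈ gridIndices fun _ => 3, F (patRestrict d N (gridCell x σ)) -
      (Fplus d Ps F r + cF r) * volOf d (gridCell x σ) ≤ 0 := fun σ hσ => by
    have hsub : gridCell x σ ⊆ supp d N := hgrid ▸ gridCell_subset hmono hσ
    have hBox : IsBox d (gridCell x σ) := ⟨_, _, fun j => hlt j _, rfl⟩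
    have hsupp := hadm.supp_patRestrict hN hBox hsub
    have hle := hF.le_Fplus_add_mul_patVol hadm (hadm.patRestrict_mem_boxPatterns hN hBox hsub)
      hsupp hr hrF fun j => hstep j _
    rw [patVol, hsupp] at hle
    exact sub_nonpos.mpr hle
  have hsum := hF.le_sum_gridCell hN hr hrF hstep (fun _ => three_pos) hgrid
    (Fplus d Ps F r + cF r)
  have hcentral : (fun _ => 1) ∈ gridIndices fun _ : Fin d => 3 :=
    mem_gridIndices.mpr fun _ => by norm_num
  have hsum_le : ∑ σ ∈ gridIndices (fun _ => 3), (F (patRestrict d N (gridCell x σ)) -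
      (Fplus d Ps F r + cF r) * volOf d (gridCell x σ)) ≤ F (patRestrict d N (boxSet d a b)) -
      (Fplus d Ps F r + cF r) * volOf d (boxSet d a b) := by
    rw [← Finset.add_sum_erase _ _ hcentral]
    exact add_le_of_nonpos_right
      (Finset.sum_nonpos fun σ hσ => hcell σ (Finset.mem_of_mem_erase hσ))
  linarith

lemma SubadditiveOn.le_add_of_occurrence [NeZero d] (hF : SubadditiveOn d Ps F dF rF cF)
    (hadm : Admissible d Ps) (hr : 0 < r) (hrF : rF ≤ r) (hM : M ∈ RPatterns d Ps r)
    (hN : N ∈ BoxPatterns d Ps) (hMbox : supp d M = boxSet d a b)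
    (hNbox : supp d N = boxSet d a' b') {t : Pt d}
    (hmargin : ∀ j, a' j + r ≤ a j + t j ∧ b j + t j + r ≤ b' j)
    (hoccur : patRestrict d N ((fun x => x + t) '' supp d M) = patTrans d t M) :
    F N ≤ (Fplus d Ps F r + 2 * cF r) * patVol d N +
      (F M - (Fplus d Ps F r + cF r) * patVol d M) := by
  have hside (j) : r ≤ b j - a j :=
    ((isRBox_boxSet_iff hr).mp (hMbox ▸ hadm.isRBox_supp hM) j).1
  have hinner := hF.le_add_patRestrict_inner_box hadm hN hNbox hr hrF
    (a := fun j => a j + t j) (b := fun j => b j + t j) (fun j => (hmargin j).1)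
    (fun j => by linarith [hside j]) fun j => (hmargin j).2
  have hvol : volOf d (boxSet d (fun j => a j + t j) fun j => b j + t j) = patVol d M := by
    rw [patVol, hMbox, volOf_boxSet fun j => by linarith [hside j],
      volOf_boxSet fun j => by linarith [hside j]]
    simp only [add_sub_add_right_eq_sub]
  rwa [hvol, ← image_add_boxSet, ← hMbox, hoccur,
    hF.invariant t M (rPatterns_subset_boxPatterns hM)] at hinner

/- The copy of `M` fills at least the fraction `r ^ d / (2 * K * r) ^ d` of `N`. -/
lemma SubadditiveOn.div_patVol_le_of_occurrence [NeZero d] (hF : SubadditiveOn d Ps F dF rF cF)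
    (hadm : Admissible d Ps) (hr : 0 < r) (hrF : rF ≤ r) (hK : 0 < K)
    (hM : M ∈ RPatterns d Ps r) (hN : N ∈ RPatterns d Ps (K * r))
    (hMbox : supp d M = boxSet d a b) (hNbox : supp d N = boxSet d a' b') {t : Pt d}
    (hmargin : ∀ j, a' j + r ≤ a j + t j ∧ b j + t j + r ≤ b' j)
    (hoccur : patRestrict d N ((fun x => x + t) '' supp d M) = patTrans d t M) :
    F N / patVol d N ≤ Fplus d Ps F r + 2 * cF r -
      (Fplus d Ps F r + cF r - F M / patVol d M) / (2 * K) ^ d := by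
  have hMpos := hadm.patVol_pos (rPatterns_subset_boxPatterns hM)
  have hNpos := hadm.patVol_pos (rPatterns_subset_boxPatterns hN)
  have hfraction : patVol d N ≤ (2 * K) ^ d * patVol d M :=
    calc patVol d N ≤ (2 * (K * r)) ^ d := (hadm.isRBox_supp hN).volOf_le
      _ = (2 * K) ^ d * r ^ d := by rw [← mul_assoc, mul_pow]
      _ ≤ _ := by gcongr; exact (hadm.isRBox_supp hM).pow_le_volOf hr.le
  have hgap : 0 ≤ Fplus d Ps F r + cF r - F M / patVol d M := by
    linarith [hF.div_patVol_le_Fplus hadm hM, hF.cF_nonneg hrF]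
  have hgapN : (Fplus d Ps F r + cF r - F M / patVol d M) / (2 * K) ^ d * patVol d N ≤
      (Fplus d Ps F r + cF r) * patVol d M - F M :=
    calc _ ≤ (Fplus d Ps F r + cF r - F M / patVol d M) * patVol d M := by
          rw [div_mul_eq_mul_div, div_le_iff₀ (by positivity), mul_assoc, mul_comm (patVol d M)]
          gcongr
      _ = _ := by rw [sub_mul, div_mul_cancel₀ _ hMpos.ne']
  rw [div_le_iff₀ hNpos, sub_mul]
  linarith [hF.le_add_of_occurrence hadm hr hrF hM (rPatterns_subset_boxPatterns hN) hMbox hNbox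
    hmargin hoccur]

lemma SubadditiveOn.exists_eventually_le_Fminus [NeZero d] (hF : SubadditiveOn d Ps F dF rF cF)
    (hadm : Admissible d Ps) (hlr : LinearlyRepetitive d Ps) (hne : Ps.Nonempty) :
    ∃ K > 0, ∀ᶠ r in atTop, Fplus d Ps F r + cF r -
      (2 * K) ^ d * (Fplus d Ps F r + 2 * cF r - Fplus d Ps F (K * r)) ≤ Fminus d Ps F r := by
  obtain ⟨K, hK, hoccurs⟩ := hlr.exists_occurrence_in_rPattern hadm
  have hKpos : 0 < K := by linarith
  refine ⟨K, hKpos, ?_⟩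
  filter_upwards [hoccurs, eventually_gt_atTop 0, eventually_ge_atTop rF] with r hoccurs hr hrF
  refine le_csInf ((hadm.rPatterns_nonempty hne hr).image _) (forall_mem_image.mpr fun M hM => ?_)
  have hsup : Fplus d Ps F (K * r) ≤ Fplus d Ps F r + 2 * cF r -
      (Fplus d Ps F r + cF r - F M / patVol d M) / (2 * K) ^ d := by
    refine csSup_le ((hadm.rPatterns_nonempty hne (by positivity)).image _)
      (forall_mem_image.mpr fun N hN => ?_)
    obtain ⟨a, b, -, hMbox, -⟩ := hadm.isRBox_supp hM
    obtain ⟨a', b', -, hNbox, -⟩ := hadm.isRBox_supp hN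
    obtain ⟨t, hmargin, hoccur⟩ := hoccurs M hM N hN a b a' b' hMbox hNbox
    exact hF.div_patVol_le_of_occurrence hadm hr hrF hKpos hM hN hMbox hNbox hmargin hoccur
  rw [le_sub_comm, div_le_iff₀' (by positivity)] at hsup
  linarith

lemma SubadditiveOn.tendsto_Fminus [NeZero d] (hF : SubadditiveOn d Ps F dF rF cF)
    (hadm : Admissible d Ps) (hlr : LinearlyRepetitive d Ps) (hne : Ps.Nonempty)
    (hL : Tendsto (Fplus d Ps F) atTop (𝓝 L)) : Tendsto (Fminus d Ps F) atTop (𝓝 L) := by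
  obtain ⟨K, hK, hlower⟩ := hF.exists_eventually_le_Fminus hadm hlr hne
  refine tendsto_of_tendsto_of_tendsto_of_le_of_le' ?_ hL hlower ?_
  · have hLK := hL.comp (tendsto_id.const_mul_atTop hK)
    simpa only [id, Function.comp_apply, mul_zero, add_zero, sub_self, sub_zero] using
      (hL.add hF.cF_lim).sub
        (((hL.add (hF.cF_lim.const_mul 2)).sub hLK).const_mul ((2 * K) ^ d))
  · filter_upwards [eventually_gt_atTop 0] with r hr
    obtain ⟨M, hM⟩ := hadm.rPatterns_nonempty hne hr
    exact (hF.Fminus_le_div_patVol hadm hM).trans (hF.div_patVol_le_Fplus hadm hM)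

lemma SubadditiveOn.exists_forall_patVol_ge_abs_sub_lt (hF : SubadditiveOn d Ps F dF rF cF)
    (hadm : Admissible d Ps) (hplus : Tendsto (Fplus d Ps F) atTop (𝓝 L))
    (hminus : Tendsto (Fminus d Ps F) atTop (𝓝 L)) {ε : ℝ} (hε : 0 < ε) :
    ∃ V > 0, ∀ r > 0, ∀ M ∈ RPatterns d Ps r, V ≤ patVol d M → |F M / patVol d M - L| < ε := by
  obtain ⟨R, hR⟩ := eventually_atTop.mp <|
    (hplus.eventually_lt_const (lt_add_of_pos_right L hε)).and
      (hminus.eventually_const_lt (sub_lt_self L hε))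
  refine ⟨|2 * R| ^ d + 1, by positivity, fun r hr M hM hV => ?_⟩
  have hRr : R ≤ r := by
    by_contra! hlt
    have : (2 * r) ^ d ≤ |2 * R| ^ d := by
      gcongr
      exact (by linarith : 2 * r ≤ 2 * R).trans (le_abs_self _)
    linarith [show patVol d M ≤ (2 * r) ^ d from (hadm.isRBox_supp hM).volOf_le]
  obtain ⟨hupper, hlower⟩ := hR r hRr
  rw [abs_sub_lt_iff]
  constructor
  · linarith [hF.div_patVol_le_Fplus hadm hM]
  · linarith [hF.Fminus_le_div_patVol hadm hM]

end Means

/-- Theorem 3.1, uniform subadditive ergodic theorem.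
For a nonempty admissible linearly repetitive set of abstract patterns and a subadditive
function `F` on its box-patterns, `F⁺(r)` and `F⁻(r)` converge to a common limit `L`,
and `F(P)/|P| → L` as `|P| → ∞` along `𝒫_∞ = ⋃_{r>0} 𝒫(r)`. -/
theorem uniform_subadditive_ergodic (d : ℕ) (Ps : Set (Set (Set (Pt d))))
    (hne : Ps.Nonempty) (hadm : Admissible d Ps) (hlr : LinearlyRepetitive d Ps)
    (F : Set (Set (Pt d)) → ℝ)
    (hF : ∃ (dF rF : ℝ) (cF : ℝ → ℝ), SubadditiveOn d Ps F dF rF cF) :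
    ∃ L : ℝ,
      Tendsto (Fplus d Ps F) atTop (nhds L) ∧
      Tendsto (Fminus d Ps F) atTop (nhds L) ∧
      ∀ ε : ℝ, 0 < ε → ∃ V : ℝ, 0 < V ∧
        ∀ r : ℝ, 0 < r → ∀ P ∈ RPatterns d Ps r,
          V ≤ patVol d P → |F P / patVol d P - L| < ε := by
  have : NeZero d := ⟨hadm.dim_ne_zero hne⟩
  obtain ⟨dF, rF, cF, hF⟩ := hF
  obtain ⟨L, hplus⟩ := hF.exists_tendsto_Fplus hadm hne
  have hminus := hF.tendsto_Fminus hadm hlr hne hplus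
  exact ⟨L, hplus, hminus, fun ε hε => hF.exists_forall_patVol_ge_abs_sub_lt hadm hplus hminus hε⟩

end
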